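/- arXiv:1909.03874 — 2 statements merged into one kernel-verified Lean document; each statement's English description precedes it below -/
import Mathlib

section
/- Fix partitions μ and ν and a natural number j with 0 ≤ j ≤ |μ| + |ν|. Then there exists a polynomial P ∈ ℚ[X] of degree at most j, whose coefficient of X^j equals 2^j · Σ_{l=0}^{j} (−1)^l · C(|μ|, j−l) · C(|ν|, l), such that for every integer k ≥ 0 the coefficient of X^{N_k − 2j} in He_{Φ(μ,ν,k)} equals P(k), where N_k = k(k+1)/2 + 2(|μ|+|ν|) = |Φ(μ,ν,k)|. (That is, for fixed 2-quotient (μ,ν), the j-th coefficient of the remainder polynomial is a polynomial in the core length k of degree at most j with the stated leading coefficient.) -/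
/-- A partition: a weakly decreasing list of positive integers. -/
def IsPartition (l : List ℕ) : Prop :=
  l.Pairwise (· ≥ ·) ∧ ∀ x ∈ l, 0 < x

/-- The degree vector of a partition: `n_i = λ_i + ℓ(λ) − i` (here `i` is 0-indexed). -/
def degVec (l : List ℕ) (i : Fin l.length) : ℕ :=
  l.get i + (l.length - 1 - (i : ℕ))

/-- The Vandermonde determinant `Δ(n_λ) = ∏_{i<j} (n_j − n_i)` of the degree vector. -/
noncomputable def vanderQ (l : List ℕ) : ℚ :=
  ∏ i : Fin l.length, ∏ j : Fin l.length,
    if (i : ℕ) < (j : ℕ) then ((degVec l j : ℚ) - (degVec l i : ℚ)) else 1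

/-- The Wronskian Hermite polynomial `He_λ = Wr[He_{n_1},…,He_{n_ℓ}] / Δ(n_λ)`. -/
noncomputable def HeW (l : List ℕ) : Polynomial ℚ :=
  Polynomial.C (vanderQ l)⁻¹ *
    (Matrix.of fun i j : Fin l.length =>
      (⇑Polynomial.derivative)^[(i : ℕ)]
        ((Polynomial.hermite (degVec l j)).map (Int.castRingHom ℚ))).det

/-- The content sum `c(λ) = Σ_{(i,j)∈λ} (j − i)`. -/
def contentSum (l : List ℕ) : ℤ :=
  ∑ i : Fin l.length, ∑ j ∈ Finset.Icc 1 (l.get i), ((j : ℤ) - ((i : ℕ) + 1))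

/-- `Phi μ ν k` is the partition with 2-core `(k,k−1,…,2,1)` and 2-quotient `(μ,ν)`:
form the set `D` of `N = 2ℓ(μ) + 2ℓ(ν) + k` distinct naturals
`{2(a_i + ℓ(ν))} ∪ {2t : t < ℓ(ν)} ∪ {2(b_j + ℓ(μ) + k) + 1} ∪ {2t+1 : t < ℓ(μ)+k}`
(where `a`, `b` are the degree vectors of `μ`, `ν`), sort it decreasingly as
`d_1 > … > d_N`, and take the parts `d_i − (N − i)`, discarding zero parts. -/
def Phi (μ ν : List ℕ) (k : ℕ) : List ℕ :=
  let D : Finset ℕ :=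
    ((Finset.univ : Finset (Fin μ.length)).image fun i => 2 * (degVec μ i + ν.length)) ∪
    ((Finset.range ν.length).image fun t => 2 * t) ∪
    ((Finset.univ : Finset (Fin ν.length)).image fun j =>
        2 * (degVec ν j + μ.length + k) + 1) ∪
    ((Finset.range (μ.length + k)).image fun t => 2 * t + 1)
  let s := D.sort (· ≤ ·)
  (((List.range s.length).map fun t => s.getD t 0 - t).reverse).filter
    fun x => decide (0 < x)

/-!
Put `He_n = ∑ₘ w_m(n) X^(n - 2m)` with `w_m` a polynomial in `n`. Expanding the Wronskian column
by column, the coefficient of `X^(|λ| - 2j)` in `He_λ` becomes the *shift ratio*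
`(∑_{|d| = j} ∏ᵢ w_{dᵢ}(nᵢ) · Δ(n - 2d)) / Δ(n)` of the degrees `n`.

If some of the nodes are closed under the shifts that have nonzero weight, the corresponding shifted
Vandermonde determinants vanish unless these nodes stay put, so they may be removed at the price of
multiplying the remaining weights by a ratio of products of differences. For consecutive nodes
`0, …, z - 1` the weights keep their shape, which accounts for trailing zeros of a partition. For
the degrees of `Φ(μ, ν, k)` the removed nodes are the first `ℓ(ν)` even and the first `ℓ(μ) + k` odd
numbers, and `ℓ(μ) + ℓ(ν)` nodes remain: up to affine normalization, `aᵢ` and `bⱼ + γ` with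
`γ = k + ℓ(μ) - ℓ(ν) + 1/2`, and weights `(-2)^m / m! · (x)_m (x - γ)_m`, where `(x)_m` is the
falling factorial.

Everything is now polynomial in `γ`, and the Vandermonde determinant divides the numerator over
`ℚ[γ]`. In top degree in `γ` the blocks `a` and `b` decouple: a shift by `m` has weight
`2^m (aᵢ)_m / m!` in the first block and `(-2)^m (bⱼ)_m / m!` in the second, and each block
contributes a sum of the form `∑_{|d| = l} ∏ᵢ C(aᵢ, dᵢ) · Δ(a - d) = C(|μ|, l) Δ(a)`.
-/

namespace WronskianHermite

open Polynomial Matrix Finset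

section CoefficientExtraction

variable {R : Type*} [CommRing R] {n : ℕ}

theorem coeff_prod_eq_sum_piAntidiag {ι : Type*} [DecidableEq ι] (s : Finset ι) (f : ι → R[X])
    (d : ℕ) : (∏ i ∈ s, f i).coeff d = ∑ r ∈ s.piAntidiag d, ∏ i ∈ s, (f i).coeff (r i) := by
  induction s using Finset.cons_induction generalizing d with
  | empty => rcases eq_or_ne d 0 with rfl | hd <;> simp [coeff_one, *]
  | cons i s hi ih =>
    rw [prod_cons, coeff_mul, piAntidiag_cons, sum_disjiUnion]
    refine sum_congr rfl fun e _ => ?_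
    rw [ih, mul_sum, sum_map]
    refine sum_congr rfl fun r hr => ?_
    have hri : r i = 0 := by_contra fun h => hi ((mem_piAntidiag.1 hr).2 i h)
    rw [prod_cons]
    congr 1
    · simp [hri]
    · refine prod_congr rfl fun k hk => ?_
      have hki : k ≠ i := fun h => hi (h ▸ hk)
      simp [hki]

theorem coeff_det_eq_sum_piAntidiag (M : Matrix (Fin n) (Fin n) R[X]) (d : ℕ) :
    M.det.coeff d = ∑ r ∈ piAntidiag univ d, (of fun i s => (M i s).coeff (r i)).det := by
  rw [← det_transpose]
  simp only [← det_transpose (of fun i s => (M i s).coeff _)]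
  simp only [det_apply, finsetSum_coeff, coeff_smul, coeff_prod_eq_sum_piAntidiag,
    transpose_apply, of_apply, smul_sum]
  exact sum_comm

/-- The weighted sum of the Vandermonde determinants of `u i - r i * h` over all shifts `r` of
total size `j`, the factor `W i (r i)` being the weight of shifting the `i`-th node. -/
def shiftSum (h : R) (W : Fin n → ℕ → R) (u : Fin n → R) (j : ℕ) : R :=
  ∑ r ∈ piAntidiag univ j, (∏ i, W i (r i)) * (vandermonde fun i => u i - r i * h).det

theorem coeff_det_eq_shiftSum {h : R} {W : Fin n → ℕ → R} {u : Fin n → R} {j : ℕ}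
    {M : Matrix (Fin n) (Fin n) R[X]} {p : Fin n → R[X]} (hdeg : ∀ s, (p s).natDegree = s)
    (hmonic : ∀ s, (p s).Monic)
    (hM : ∀ i s, ∀ m ≤ j, (M i s).coeff m = W i m * (p s).eval (u i - m * h)) :
    M.det.coeff j = shiftSum h W u j := by
  rw [coeff_det_eq_sum_piAntidiag]
  refine sum_congr rfl fun r hr => ?_
  have hrj : ∀ i, r i ≤ j := fun i =>
    (single_le_sum (fun _ _ => Nat.zero_le _) (mem_univ i)).trans_eq (mem_piAntidiag.1 hr).1
  rw [det_eval_matrixOfPolynomials_eq_det_vandermonde _ p hdeg hmonic, ← det_mul_column]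
  simp only [hM _ _ _ (hrj _), of_apply]

theorem map_shiftSum {S : Type*} [CommRing S] (φ : R →+* S) (h : R) (W : Fin n → ℕ → R)
    (u : Fin n → R) (j : ℕ) :
    φ (shiftSum h W u j) = shiftSum (φ h) (fun i m => φ (W i m)) (fun i => φ (u i)) j := by
  simp [shiftSum, det_vandermonde]

theorem vandermonde_dvd_det_eval (p : Fin n → R[X]) (u : Fin n → R) :
    (vandermonde u).det ∣ (of fun i s => (p s).eval (u i)).det := by
  nontriviality R
  set N : R[X] := ∏ i, (X - C (u i)) with hN
  have hmonic : N.Monic := monic_prod_of_monic _ _ fun i _ => monic_X_sub_C _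
  have hdeg : N.natDegree = n := by simp [hN]
  refine ⟨(of fun t s : Fin n => (p s %ₘ N).coeff t).det, ?_⟩
  rw [← det_mul]
  congr 1
  ext i s
  have hroot : N.eval (u i) = 0 := by
    rw [hN, eval_prod]
    exact prod_eq_zero (mem_univ i) (by simp)
  have hlt : (p s %ₘ N).natDegree < n :=
    hdeg ▸ natDegree_modByMonic_lt (p s) hmonic
      (ne_of_apply_ne natDegree (by simpa [hdeg] using i.pos.ne'))
  have hmod : (p s).eval (u i) = (p s %ₘ N).eval (u i) := by
    conv_lhs => rw [← modByMonic_add_div (p s) N]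
    simp [hroot]
  rw [of_apply, mul_apply, hmod, eval_eq_sum_range' hlt, sum_range]
  exact sum_congr rfl fun t _ => by rw [vandermonde_apply, of_apply, mul_comm]

theorem vandermonde_dvd_shiftSum (h : R) (g : ℕ → R[X]) (u : Fin n → R) (j : ℕ) :
    (vandermonde u).det ∣ shiftSum h (fun i m => (g m).eval (u i)) u j := by
  let p (s : Fin n) : R[X][X] :=
    ∑ m ∈ range (j + 1), (g m * (X - C (m * h)) ^ (s : ℕ)).map C * C (X ^ m)
  have hp (i s : Fin n) : ∀ m ≤ j, ((p s).eval (C (u i))).coeff m =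
      (g m).eval (u i) * (X ^ (s : ℕ) : R[X]).eval (u i - m * h) := by
    intro m hm
    have hev : (p s).eval (C (u i)) =
        ∑ m ∈ range (j + 1), C ((g m).eval (u i) * (u i - m * h) ^ (s : ℕ)) * X ^ m := by
      simp [p, eval_finsetSum, eval_map_apply]
    simp only [hev, finsetSum_coeff, coeff_C_mul_X_pow, sum_ite_eq, eval_pow, eval_X,
      mem_range_succ_iff.2 hm, if_true]
  obtain ⟨Q, hQ⟩ := vandermonde_dvd_det_eval p fun i => C (u i)
  have hC : (vandermonde fun i => C (u i)).det = C (vandermonde u).det := by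
    simp [det_vandermonde]
  nontriviality R
  refine ⟨Q.coeff j, ?_⟩
  rw [← coeff_C_mul, ← hC, ← hQ]
  refine (coeff_det_eq_shiftSum (fun s => ?_) (fun s => monic_X_pow _) hp).symm
  exact natDegree_X_pow _

end CoefficientExtraction

section ShiftRatio

variable {R : Type*} [CommRing R] {K : Type*} [Field K] {m n : ℕ}

theorem det_vandermonde_mul (a : R) (v : Fin n → R) :
    (vandermonde fun i => a * v i).det = (∏ i : Fin n, a ^ (i : ℕ)) * (vandermonde v).det := by
  rw [← det_mul_row]
  congr 1
  ext i j
  simp [mul_pow]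

theorem det_vandermonde_append (x : Fin m → R) (y : Fin n → R) :
    (vandermonde (Fin.append x y)).det =
      (vandermonde x).det * (vandermonde y).det * ∏ j, ∏ i, (y j - x i) := by
  have det_eq_prod_ite {l : ℕ} (v : Fin l → R) : (vandermonde v).det =
      ∏ i, ∏ j, if i < j then v j - v i else 1 := by
    rw [det_vandermonde]
    refine prod_congr rfl fun i _ => ?_
    rw [← prod_filter]
    exact prod_congr (by ext j; simp) fun _ _ => rfl
  have castAdd_lt_natAdd (i : Fin m) (j : Fin n) : Fin.castAdd n i < Fin.natAdd m j :=
    Fin.lt_def.2 (i.2.trans_le (Nat.le_add_right m j))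
  have not_natAdd_lt (i : Fin m) (j : Fin n) : ¬ Fin.natAdd m j < Fin.castAdd n i :=
    (castAdd_lt_natAdd i j).asymm
  have castAdd_lt_castAdd (i j : Fin m) : Fin.castAdd n i < Fin.castAdd n j ↔ i < j := Iff.rfl
  simp only [det_eq_prod_ite, Fin.prod_univ_add, Fin.append_left, Fin.append_right,
    prod_mul_distrib, castAdd_lt_natAdd, not_natAdd_lt, castAdd_lt_castAdd,
    Fin.natAdd_lt_natAdd_iff, if_true, if_false, prod_const_one]
  rw [prod_comm (f := fun i j => y j - x i)]
  ring

theorem sum_piAntidiag_fin_add {M : Type*} [AddCommMonoid M] (F : (Fin (m + n) → ℕ) → M) (j : ℕ) :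
    ∑ r ∈ piAntidiag univ j, F r = ∑ d ∈ antidiagonal j,
      ∑ r ∈ piAntidiag univ d.1, ∑ s ∈ piAntidiag univ d.2, F (Fin.append r s) := by
  simp_rw [← sum_product' (piAntidiag univ _) (piAntidiag univ _) fun r s => F (Fin.append r s)]
  rw [sum_sigma']
  refine sum_bij' (fun r _ => ⟨(∑ i, r (Fin.castAdd n i), ∑ i, r (Fin.natAdd m i)),
      (fun i => r (Fin.castAdd n i), fun i => r (Fin.natAdd m i))⟩)
    (fun x _ => Fin.append x.2.1 x.2.2) ?_ ?_ ?_ ?_ ?_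
  · intro r hr
    simpa [Fin.sum_univ_add] using hr
  · rintro ⟨d, r, s⟩ h
    simp only [mem_sigma, HasAntidiagonal.mem_antidiagonal, mem_product, mem_piAntidiag] at h
    simp [Fin.sum_univ_add, h.1, h.2.1.1, h.2.2.1]
  · simp [Fin.append_castAdd_natAdd]
  · rintro ⟨⟨d, e⟩, r, s⟩ h
    simp only [mem_sigma, HasAntidiagonal.mem_antidiagonal, mem_product, mem_piAntidiag] at h
    simp [← h.2.1.1, ← h.2.2.1]
  · simp [Fin.append_castAdd_natAdd]

/-- The sum `shiftSum h W u j` relative to the Vandermonde determinant of the unshifted nodes; it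
is meant for pairwise distinct nodes, and is `0` otherwise. -/
def shiftRatio (h : K) (W : Fin n → ℕ → K) (u : Fin n → K) (j : ℕ) : K :=
  shiftSum h W u j / (vandermonde u).det

theorem shiftRatio_affine {a : K} (ha : a ≠ 0) (c h : K) (W : Fin n → ℕ → K) (u : Fin n → K)
    (j : ℕ) : shiftRatio (a * h) W (fun i => a * u i + c) j = shiftRatio h W u j := by
  have hnode (r : Fin n → ℕ) : (fun i => a * u i + c - r i * (a * h)) =
      fun i => a * (u i - r i * h) + c := by
    ext i; ring
  simp only [shiftRatio, shiftSum, hnode, det_vandermonde_add, det_vandermonde_mul,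
    mul_left_comm _ (∏ i : Fin n, a ^ (i : ℕ)), ← mul_sum]
  exact mul_div_mul_left _ _ (prod_ne_zero_iff.2 fun i _ => pow_ne_zero _ ha)

theorem shiftRatio_comp_equiv (e : Fin m ≃ Fin n) (h : K) (W : Fin n → ℕ → K) (u : Fin n → K)
    (j : ℕ) : shiftRatio h (fun i => W (e i)) (fun i => u (e i)) j = shiftRatio h W u j := by
  obtain rfl : m = n := by simpa using Fintype.card_congr e
  have det_perm (v : Fin m → K) : (vandermonde fun i => v (e i)).det =
      ((Equiv.Perm.sign e : ℤ) : K) * (vandermonde v).det := det_permute e (vandermonde v)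
  have hsum : shiftSum h (fun i => W (e i)) (fun i => u (e i)) j =
      ((Equiv.Perm.sign e : ℤ) : K) * shiftSum h W u j := by
    rw [shiftSum, shiftSum, mul_sum]
    refine sum_equiv (e.arrowCongr (Equiv.refl ℕ)) (fun r => ?_) fun r _ => ?_
    · simp only [mem_piAntidiag, mem_univ, implies_true, and_true]
      rw [← e.symm.sum_comp r]
      rfl
    · rw [mul_left_comm, ← det_perm, ← e.prod_comp fun i => W i _]
      simp
  rw [shiftRatio, hsum, det_perm]
  have hsign : ((Equiv.Perm.sign e : ℤ) : K) ≠ 0 := by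
    rcases Int.units_eq_one_or (Equiv.Perm.sign e) with h | h <;> simp [h]
  exact mul_div_mul_left _ _ hsign

theorem prod_mul_det_vandermonde_eq_zero_of_closed [CharZero K] {h : K} (hh : h ≠ 0)
    {W : Fin n → ℕ → K} {b : Fin n → K} (hW : ∀ i d, W i d ≠ 0 → ∃ k, b k = b i - d * h)
    {r : Fin n → ℕ} (hr : r ≠ 0) :
    (∏ i, W i (r i)) * (vandermonde fun i => b i - r i * h).det = 0 := by
  by_contra hne
  obtain ⟨hprod, hdet⟩ := mul_ne_zero_iff.1 hne
  choose σ hσ using fun i => hW i (r i) (prod_ne_zero_iff.1 hprod i (mem_univ i))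
  have hσ_bij : Function.Bijective σ := by
    refine Finite.injective_iff_bijective.1 (Function.Injective.of_comp (f := b) ?_)
    simpa only [Function.comp_def, hσ] using det_vandermonde_ne_zero_iff.1 hdet
  have hsum : ((∑ i, r i : ℕ) : K) * h = 0 := by
    have hsum_eq : ∑ i, (b i - r i * h) = ∑ i, b i := by
      simpa only [hσ] using hσ_bij.sum_comp b
    simpa [sum_sub_distrib, ← sum_mul] using hsum_eq
  have hr_zero : ∑ i, r i = 0 := Nat.cast_eq_zero.1 ((mul_eq_zero.1 hsum).resolve_right hh)
  exact hr (funext fun i => sum_eq_zero_iff.1 hr_zero i (mem_univ i))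

theorem append_sub_append_mul (h : R) (x : Fin m → R) (y : Fin n → R) (r : Fin m → ℕ)
    (s : Fin n → ℕ) : (fun i => Fin.append x y i - Fin.append r s i * h) =
      Fin.append (fun i => x i - r i * h) (fun i => y i - s i * h) := by
  ext i
  induction i using Fin.addCases <;> simp

/-- A set `b` of nodes which no nonzero weight leaves contributes only through its interaction
with the remaining nodes `u`, which is absorbed in the weights `W'`. -/
theorem shiftSum_append_of_closed [CharZero K] {h : K} (hh : h ≠ 0)
    {W : Fin (m + n) → ℕ → K} {W' : Fin n → ℕ → K} {b : Fin m → K} {u : Fin n → K}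
    (hW0 : ∀ i, W (Fin.castAdd n i) 0 = 1)
    (hW : ∀ i d, W (Fin.castAdd n i) d ≠ 0 → ∃ k, b k = b i - d * h)
    (hW' : ∀ t d, W (Fin.natAdd m t) d * ∏ i, (u t - d * h - b i) = W' t d * ∏ i, (u t - b i))
    (j : ℕ) : shiftSum h W (Fin.append b u) j =
      (vandermonde b).det * (∏ t, ∏ i, (u t - b i)) * shiftSum h W' u j := by
  have hterm (r : Fin m → ℕ) (s : Fin n → ℕ) (hr : r ≠ 0) :
      (∏ i, W i (Fin.append r s i)) *
        (vandermonde fun i => Fin.append b u i - Fin.append r s i * h).det = 0 := by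
    have hzero := prod_mul_det_vandermonde_eq_zero_of_closed hh hW hr
    rw [append_sub_append_mul, det_vandermonde_append, Fin.prod_univ_add]
    simp only [Fin.append_left, Fin.append_right]
    linear_combination (∏ t, W (Fin.natAdd m t) (s t)) *
      ((vandermonde fun t => u t - s t * h).det * ∏ t, ∏ i, (u t - s t * h - (b i - r i * h))) *
      hzero
  rw [shiftSum, sum_piAntidiag_fin_add, sum_eq_single (0, j), piAntidiag_zero, sum_singleton,
    shiftSum, mul_sum]
  · refine sum_congr rfl fun s _ => ?_
    have hprod := prod_congr rfl fun t (_ : t ∈ univ) => hW' t (s t)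
    rw [prod_mul_distrib, prod_mul_distrib] at hprod
    rw [append_sub_append_mul, det_vandermonde_append, Fin.prod_univ_add]
    simp only [Fin.append_left, Fin.append_right, Pi.zero_apply, hW0, prod_const_one,
      Nat.cast_zero, zero_mul, sub_zero]
    linear_combination
      (vandermonde b).det * (vandermonde fun t => u t - s t * h).det * hprod
  · rintro ⟨d, e⟩ hde hne
    refine sum_eq_zero fun r hr => sum_eq_zero fun s _ => hterm r s ?_
    rintro rfl
    simp_all [eq_comm]
  · simp

theorem shiftRatio_append_of_closed [CharZero K] {h : K} (hh : h ≠ 0)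
    {W : Fin (m + n) → ℕ → K} {W' : Fin n → ℕ → K} {b : Fin m → K} {u : Fin n → K}
    (hinj : Function.Injective (Fin.append b u)) (hW0 : ∀ i, W (Fin.castAdd n i) 0 = 1)
    (hW : ∀ i d, W (Fin.castAdd n i) d ≠ 0 → ∃ k, b k = b i - d * h)
    (hW' : ∀ t d, W (Fin.natAdd m t) d * ∏ i, (u t - d * h - b i) = W' t d * ∏ i, (u t - b i))
    (j : ℕ) : shiftRatio h W (Fin.append b u) j = shiftRatio h W' u j := by
  obtain ⟨hb, -, hbu⟩ := Fin.append_injective_iff.1 hinj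
  rw [shiftRatio, shiftSum_append_of_closed hh hW0 hW hW', det_vandermonde_append,
    mul_right_comm (vandermonde b).det (vandermonde u).det]
  refine mul_div_mul_left _ _ (mul_ne_zero (det_vandermonde_ne_zero_iff.2 hb) ?_)
  exact prod_ne_zero_iff.2 fun t _ => prod_ne_zero_iff.2 fun i _ => sub_ne_zero.2 (hbu i t).symm

end ShiftRatio

/-- `HasTopCoeff p d a` says that `p` has degree at most `d`, with coefficient `a` (possibly `0`)
in degree `d`. -/
def HasTopCoeff {R : Type*} [CommRing R] (p : R[X]) (d : ℕ) (a : R) : Prop :=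
  p.natDegree ≤ d ∧ p.coeff d = a

namespace HasTopCoeff

variable {R : Type*} [CommRing R] {p q : R[X]} {d e : ℕ} {a b : R}

theorem mul (hp : HasTopCoeff p d a) (hq : HasTopCoeff q e b) :
    HasTopCoeff (p * q) (d + e) (a * b) :=
  ⟨natDegree_mul_le_of_le hp.1 hq.1, by rw [coeff_mul_add_eq_of_natDegree_le hp.1 hq.1, hp.2, hq.2]⟩

theorem C (a : R) : HasTopCoeff (C a) 0 a :=
  ⟨(natDegree_C a).le, coeff_C_zero⟩

theorem X_add_C (a : R) : HasTopCoeff (X + Polynomial.C a) 1 1 :=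
  ⟨natDegree_add_C.trans_le natDegree_X_le, by simp⟩

theorem sum {ι : Type*} {s : Finset ι} {p : ι → R[X]} {a : ι → R}
    (h : ∀ i ∈ s, HasTopCoeff (p i) d (a i)) :
    HasTopCoeff (∑ i ∈ s, p i) d (∑ i ∈ s, a i) :=
  ⟨natDegree_sum_le_of_forall_le s p fun i hi => (h i hi).1, by
    rw [finsetSum_coeff]; exact sum_congr rfl fun i hi => (h i hi).2⟩

theorem prod {ι : Type*} {s : Finset ι} {p : ι → R[X]} {d : ι → ℕ} {a : ι → R}
    (h : ∀ i ∈ s, HasTopCoeff (p i) (d i) (a i)) :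
    HasTopCoeff (∏ i ∈ s, p i) (∑ i ∈ s, d i) (∏ i ∈ s, a i) := by
  induction s using Finset.cons_induction with
  | empty => simpa using C (1 : R)
  | cons i s hi ih =>
    simp only [prod_cons, sum_cons]
    exact (h i (mem_cons_self i s)).mul (ih fun k hk => h k (mem_cons_of_mem hk))

theorem comp_X_add_C (hp : HasTopCoeff p d a) (r : R) :
    HasTopCoeff (p.comp (X + Polynomial.C r)) d a := by
  refine ⟨by rw [← taylor_apply, natDegree_taylor]; exact hp.1, ?_⟩
  rw [← hp.2, ← taylor_apply]
  rcases hp.1.lt_or_eq with hlt | rfl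
  · rw [coeff_eq_zero_of_natDegree_lt hlt,
      coeff_eq_zero_of_natDegree_lt ((natDegree_taylor p r).trans_lt hlt)]
  · rw [coeff_taylor_natDegree, leadingCoeff]

theorem of_mul [IsDomain R] (ha : a ≠ 0) (hp : HasTopCoeff p d a)
    (hpq : HasTopCoeff (p * q) (d + e) (a * b)) : HasTopCoeff q e b := by
  have hp_coeff : p.coeff d ≠ 0 := hp.2.trans_ne ha
  have hp_deg : p.natDegree = d := hp.1.antisymm (le_natDegree_of_ne_zero hp_coeff)
  have hq_deg : q.natDegree ≤ e := by
    rcases eq_or_ne q 0 with rfl | hq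
    · simp
    · have hle := hpq.1
      rw [natDegree_mul (by rintro rfl; simp at hp_coeff) hq, hp_deg] at hle
      exact Nat.le_of_add_le_add_left hle
  refine ⟨hq_deg, mul_left_cancel₀ ha ?_⟩
  rw [← hpq.2, coeff_mul_add_eq_of_natDegree_le hp.1 hq_deg, hp.2]

end HasTopCoeff

section Binomial

variable {n : ℕ}

theorem descPochhammer_eval_mul_eval_sub_comm {R : Type*} [CommRing R] (x : R) (m s : ℕ) :
    (descPochhammer R m).eval x * (descPochhammer R s).eval (x - m) =
      (descPochhammer R s).eval x * (descPochhammer R m).eval (x - s) := by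
  have eval_add (k l : ℕ) : (descPochhammer R k).eval x * (descPochhammer R l).eval (x - k) =
      (descPochhammer R (k + l)).eval x := by
    simp [← descPochhammer_mul, eval_comp]
  rw [eval_add, eval_add, add_comm]

theorem choose_mul_descPochhammer_eval_sub (K : Type*) [Field K] [CharZero K] (a s m : ℕ) :
    (a.choose m : K) * (descPochhammer K s).eval ((a : K) - m) =
      a.descFactorial s * (a - s).choose m := by
  rw [Nat.cast_choose_eq_descPochhammer_div, div_mul_eq_mul_div,
    descPochhammer_eval_mul_eval_sub_comm, descPochhammer_eval_eq_descFactorial]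
  rcases lt_or_ge a s with has | hsa
  · simp [Nat.descFactorial_eq_zero_iff_lt.2 has]
  · rw [← Nat.cast_sub hsa, mul_div_assoc, ← Nat.cast_choose_eq_descPochhammer_div]

/-- Differentiating `(1 + X) ^ a i` turns the shifts into a single power of `1 + X`. -/
theorem shiftSum_choose {K : Type*} [Field K] [CharZero K] {a : Fin n → ℕ} {A : ℕ}
    (hA : ∑ i, a i = A + ∑ i : Fin n, (i : ℕ)) (j : ℕ) :
    shiftSum (1 : K) (fun i m => ((a i).choose m : K)) (fun i => (a i : K)) j =
      A.choose j * (vandermonde fun i => (a i : K)).det := by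
  let M : Matrix (Fin n) (Fin n) K[X] :=
    of fun i s => C ((a i).descFactorial s : K) * (1 + X) ^ (a i - s)
  have hdeg (s : Fin n) : (descPochhammer K s).natDegree = s := descPochhammer_natDegree K s
  have hmonic (s : Fin n) : (descPochhammer K s).Monic := monic_descPochhammer K s
  have hM : M.det.coeff j =
      shiftSum 1 (fun i m => ((a i).choose m : K)) (fun i => (a i : K)) j := by
    refine coeff_det_eq_shiftSum hdeg hmonic fun i s m _ => ?_
    simp [M, coeff_one_add_X_pow, choose_mul_descPochhammer_eval_sub]
  have hrow : (∏ s : Fin n, (1 + X : K[X]) ^ (s : ℕ)) * M.det =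
      (∏ i, (1 + X : K[X]) ^ a i) * C (vandermonde fun i => (a i : K)).det := by
    rw [det_eval_matrixOfPolynomials_eq_det_vandermonde _ _ hdeg hmonic, RingHom.map_det,
      ← det_mul_row, ← det_mul_column]
    congr 1
    ext1 i s
    rcases lt_or_ge (a i) s with hlt | hle
    · simp [M, descPochhammer_eval_eq_descFactorial, Nat.descFactorial_eq_zero_iff_lt.2 hlt]
    · simp [M, descPochhammer_eval_eq_descFactorial, mul_left_comm, ← pow_add, hle, mul_comm]
  have hdet : M.det = (1 + X) ^ A * C (vandermonde fun i => (a i : K)).det := by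
    have hX : (1 + X : K[X]) ≠ 0 := by
      rw [add_comm]; exact (monic_X_add_C 1).ne_zero
    refine mul_left_cancel₀ (pow_ne_zero (∑ s : Fin n, (s : ℕ)) hX) ?_
    rw [← mul_assoc, ← pow_add, add_comm _ A, ← hA, ← prod_pow_eq_pow_sum, ← prod_pow_eq_pow_sum,
      hrow]
  rw [← hM, hdet, coeff_mul_C, coeff_one_add_X_pow]

end Binomial

section QuotientNodes

variable {p q : ℕ}

/-- The degree vectors `a` and `b` of the two components of a 2-quotient as a single family of
nodes, with `b` displaced by `γ`, which encodes the core length; `a i` corresponds to an even and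
`γ + b i` to an odd entry of the degree vector of the partition, up to an affine substitution. -/
def quotientNodes {R : Type*} [CommRing R] (γ : R) (a : Fin p → ℕ) (b : Fin q → ℕ) :
    Fin (p + q) → R :=
  Fin.append (fun i => (a i : R)) (fun i => γ + b i)

/-- The weight of shifting one of the `quotientNodes γ a b` by `m`, as a polynomial in that node. -/
noncomputable def quotientWeight {R : Type*} [CommRing R] [Algebra ℚ R] (γ : R) (m : ℕ) : R[X] :=
  C (algebraMap ℚ R ((-2) ^ m / m.factorial)) * descPochhammer R m *
    (descPochhammer R m).comp (X - C γ)

theorem quotientWeight_eval {R : Type*} [CommRing R] [Algebra ℚ R] (γ x : R) (m : ℕ) :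
    (quotientWeight γ m).eval x = algebraMap ℚ R ((-2) ^ m / m.factorial) *
      (descPochhammer R m).eval x * (descPochhammer R m).eval (x - γ) := by
  simp only [quotientWeight, eval_mul, eval_C, eval_comp, eval_sub, eval_X]

theorem map_quotientNodes {R S : Type*} [CommRing R] [CommRing S] (φ : R →+* S) (γ : R)
    (a : Fin p → ℕ) (b : Fin q → ℕ) (i : Fin (p + q)) :
    φ (quotientNodes γ a b i) = quotientNodes (φ γ) a b i := by
  induction i using Fin.addCases <;> simp [quotientNodes]

theorem map_quotientWeight_eval {R S : Type*} [CommRing R] [CommRing S] [Algebra ℚ R] [Algebra ℚ S]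
    (φ : R →+* S) (γ x : R) (m : ℕ) :
    φ ((quotientWeight γ m).eval x) = (quotientWeight (φ γ) m).eval (φ x) := by
  have hdesc (y : R) : φ ((descPochhammer R m).eval y) = (descPochhammer S m).eval (φ y) := by
    rw [← descPochhammer_map φ, eval_map_apply]
  simp only [quotientWeight_eval, map_mul, hdesc, map_sub, RingHom.map_rat_algebraMap]

theorem hasTopCoeff_descPochhammer_eval {f : ℚ[X]} {c : ℚ} (hf : HasTopCoeff f 1 c) (m : ℕ) :
    HasTopCoeff ((descPochhammer ℚ[X] m).eval f) m (c ^ m) := by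
  have hfactor (i : ℕ) : HasTopCoeff (f - (i : ℚ[X])) 1 c := by
    rw [← C_eq_natCast]
    exact ⟨(natDegree_sub_C ..).trans_le hf.1, by simpa using hf.2⟩
  rw [descPochhammer_eval_eq_prod_range]
  simpa using HasTopCoeff.prod fun i (_ : i ∈ range m) => hfactor i

theorem descPochhammer_eval_natCast_eq_C (n m : ℕ) :
    (descPochhammer ℚ[X] m).eval (n : ℚ[X]) = C (m.factorial * n.choose m : ℚ) := by
  rw [descPochhammer_eval_eq_descFactorial, Nat.descFactorial_eq_factorial_mul_choose]
  simp

theorem hasTopCoeff_quotientWeight_eval_left (n m : ℕ) :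
    HasTopCoeff ((quotientWeight (X : ℚ[X]) m).eval (n : ℚ[X])) m (2 ^ m * n.choose m) := by
  have hlin : HasTopCoeff ((n : ℚ[X]) - X) 1 (-1) :=
    ⟨(natDegree_sub_le _ _).trans (by simp), by simp [coeff_natCast_ite]⟩
  have htop := ((HasTopCoeff.C ((-2) ^ m / m.factorial : ℚ)).mul
    (HasTopCoeff.C (m.factorial * n.choose m : ℚ))).mul (hasTopCoeff_descPochhammer_eval hlin m)
  have hcoeff : (-2 : ℚ) ^ m / m.factorial * (m.factorial * n.choose m) * (-1) ^ m =
      2 ^ m * n.choose m := by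
    rw [neg_pow (2 : ℚ)]
    field_simp
    rw [pow_right_comm, neg_one_sq, one_pow, one_mul]
  rw [quotientWeight_eval, algebraMap_eq, descPochhammer_eval_natCast_eq_C, ← hcoeff]
  simpa only [zero_add] using htop

theorem hasTopCoeff_quotientWeight_eval_right (n m : ℕ) :
    HasTopCoeff ((quotientWeight (X : ℚ[X]) m).eval (X + (n : ℚ[X]))) m
      ((-2) ^ m * n.choose m) := by
  have htop := ((HasTopCoeff.C ((-2) ^ m / m.factorial : ℚ)).mul
    (hasTopCoeff_descPochhammer_eval (HasTopCoeff.X_add_C (n : ℚ)) m)).mul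
    (HasTopCoeff.C (m.factorial * n.choose m : ℚ))
  have hcoeff : (-2 : ℚ) ^ m / m.factorial * 1 ^ m * (m.factorial * n.choose m) =
      (-2) ^ m * n.choose m := by
    field_simp
    simp
  rw [quotientWeight_eval, algebraMap_eq, add_sub_cancel_left, descPochhammer_eval_natCast_eq_C,
    ← C_eq_natCast, ← hcoeff]
  simpa only [zero_add, add_zero] using htop

theorem hasTopCoeff_det_vandermonde_append (x : Fin p → ℚ) (y : Fin q → ℚ) :
    HasTopCoeff (vandermonde (Fin.append (fun i => C (x i)) fun i => X + C (y i))).det (p * q)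
      ((vandermonde x).det * (vandermonde y).det) := by
  have hx : (vandermonde fun i => C (x i)).det = C (vandermonde x).det := by simp [det_vandermonde]
  have hy : (vandermonde fun i => X + C (y i)).det = C (vandermonde y).det := by
    simp [det_vandermonde]
  have hxy : HasTopCoeff (∏ j, ∏ i, (X + C (y j) - C (x i))) (p * q) 1 := by
    have hprod := HasTopCoeff.prod fun j (_ : j ∈ univ) => HasTopCoeff.prod
      fun i (_ : i ∈ univ) => HasTopCoeff.X_add_C (y j - x i)
    simpa [add_sub_assoc, mul_comm] using hprod
  rw [det_vandermonde_append, hx, hy]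
  simpa using ((HasTopCoeff.C _).mul (HasTopCoeff.C _)).mul hxy

theorem hasTopCoeff_shift_quotientNodes (a : Fin p → ℕ) (b : Fin q → ℕ) (r : Fin p → ℕ)
    (s : Fin q → ℕ) :
    HasTopCoeff ((∏ i, (quotientWeight X (Fin.append r s i)).eval (quotientNodes X a b i)) *
        (vandermonde fun i => quotientNodes X a b i - ((Fin.append r s i : ℕ) : ℚ[X]) * 1).det)
      (∑ i, r i + ∑ i, s i + p * q)
      (2 ^ (∑ i, r i) * (-2) ^ (∑ i, s i) *
        (((∏ i, ((a i).choose (r i) : ℚ)) * (vandermonde fun i => (a i : ℚ) - r i * 1).det) *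
          ((∏ i, ((b i).choose (s i) : ℚ)) * (vandermonde fun i => (b i : ℚ) - s i * 1).det))) := by
  have hleft := HasTopCoeff.prod fun i (_ : i ∈ univ) =>
    hasTopCoeff_quotientWeight_eval_left (a i) (r i)
  have hright := HasTopCoeff.prod fun i (_ : i ∈ univ) =>
    hasTopCoeff_quotientWeight_eval_right (b i) (s i)
  have hvand := hasTopCoeff_det_vandermonde_append (fun i => (a i : ℚ) - r i * 1)
    (fun i => (b i : ℚ) - s i * 1)
  rw [quotientNodes, append_sub_append_mul, Fin.prod_univ_add]
  simp only [Fin.append_left, Fin.append_right]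
  convert (hleft.mul hright).mul hvand using 1
  · simp [add_sub_assoc]
  · simp only [prod_mul_distrib, prod_pow_eq_pow_sum]
    ring

/-- Only the leading terms of the weights and of the mixed factors of the Vandermonde determinants
matter, so that the sum over the shifts factors into the two sums of `shiftSum_choose`. -/
theorem hasTopCoeff_shiftSum_quotientWeight {a : Fin p → ℕ} {b : Fin q → ℕ} {A B : ℕ}
    (hA : ∑ i, a i = A + ∑ i : Fin p, (i : ℕ)) (hB : ∑ i, b i = B + ∑ i : Fin q, (i : ℕ)) (j : ℕ) :
    HasTopCoeff (shiftSum (1 : ℚ[X]) (fun i m => (quotientWeight X m).eval (quotientNodes X a b i))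
      (quotientNodes X a b) j) (p * q + j)
      ((vandermonde fun i => (a i : ℚ)).det * (vandermonde fun i => (b i : ℚ)).det *
        (2 ^ j * ∑ l ∈ range (j + 1), (-1 : ℚ) ^ l * A.choose (j - l) * B.choose l)) := by
  have hblock (d : ℕ × ℕ) (hd : d ∈ HasAntidiagonal.antidiagonal j) :
      HasTopCoeff (∑ r ∈ piAntidiag univ d.1, ∑ s ∈ piAntidiag univ d.2,
        (∏ i, (quotientWeight X (Fin.append r s i)).eval (quotientNodes X a b i)) *
          (vandermonde fun i => quotientNodes X a b i - ((Fin.append r s i : ℕ) : ℚ[X]) * 1).det)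
        (p * q + j) (2 ^ d.1 * (-2) ^ d.2 *
          ((A.choose d.1 * (vandermonde fun i => (a i : ℚ)).det) *
            (B.choose d.2 * (vandermonde fun i => (b i : ℚ)).det))) := by
    rw [← shiftSum_choose hA, ← shiftSum_choose hB, shiftSum, shiftSum, sum_mul_sum, mul_sum]
    simp only [mul_sum]
    refine HasTopCoeff.sum fun r hr => HasTopCoeff.sum fun s hs => ?_
    have hterm := hasTopCoeff_shift_quotientNodes a b r s
    rwa [(mem_piAntidiag.1 hr).1, (mem_piAntidiag.1 hs).1, HasAntidiagonal.mem_antidiagonal.1 hd,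
      add_comm j] at hterm
  rw [shiftSum, sum_piAntidiag_fin_add]
  convert HasTopCoeff.sum hblock using 1
  rw [← Nat.sum_antidiagonal_swap, Nat.sum_antidiagonal_eq_sum_range_succ_mk, mul_sum, mul_sum]
  refine sum_congr rfl fun l hl => ?_
  have hpow : (2 : ℚ) ^ j = 2 ^ (j - l) * 2 ^ l := by
    rw [← pow_add, Nat.sub_add_cancel (mem_range_succ_iff.1 hl)]
  simp only [Prod.swap_prod_mk, neg_pow (2 : ℚ), hpow]
  ring

theorem exists_polynomial_shiftRatio_quotientNodes {a : Fin p → ℕ} {b : Fin q → ℕ} {A B : ℕ}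
    (ha : Function.Injective a) (hb : Function.Injective b)
    (hA : ∑ i, a i = A + ∑ i : Fin p, (i : ℕ)) (hB : ∑ i, b i = B + ∑ i : Fin q, (i : ℕ)) (j : ℕ) :
    ∃ P : ℚ[X],
      HasTopCoeff P j (2 ^ j * ∑ l ∈ range (j + 1), (-1 : ℚ) ^ l * A.choose (j - l) * B.choose l) ∧
      ∀ γ : ℚ, Function.Injective (quotientNodes γ a b) →
        shiftRatio 1 (fun i m => (quotientWeight γ m).eval (quotientNodes γ a b i))
          (quotientNodes γ a b) j = P.eval γ := by
  obtain ⟨P, hP⟩ := vandermonde_dvd_shiftSum 1 (quotientWeight (X : ℚ[X])) (quotientNodes X a b) j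
  refine ⟨P, ?_, fun γ hγ => ?_⟩
  · have hΔ : (vandermonde fun i => (a i : ℚ)).det * (vandermonde fun i => (b i : ℚ)).det ≠ 0 :=
      mul_ne_zero (det_vandermonde_ne_zero_iff.2 (Nat.cast_injective.comp ha))
        (det_vandermonde_ne_zero_iff.2 (Nat.cast_injective.comp hb))
    have hvand := hasTopCoeff_det_vandermonde_append (fun i => (a i : ℚ)) fun i => (b i : ℚ)
    have hsum := hasTopCoeff_shiftSum_quotientWeight hA hB j
    rw [hP] at hsum
    refine hvand.of_mul hΔ ?_
    simpa [quotientNodes] using hsum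
  · have heval := congrArg (evalRingHom γ) hP
    rw [map_shiftSum, map_mul, RingHom.map_det] at heval
    have hvand : (evalRingHom γ).mapMatrix (vandermonde (quotientNodes X a b)) =
        vandermonde (quotientNodes γ a b) := by
      ext i k
      rw [RingHom.mapMatrix_apply, map_apply, vandermonde_apply, vandermonde_apply, map_pow,
        map_quotientNodes, coe_evalRingHom, eval_X]
    rw [hvand] at heval
    rw [shiftRatio, div_eq_iff (det_vandermonde_ne_zero_iff.2 hγ), mul_comm (eval γ P)]
    simpa [map_quotientNodes, map_quotientWeight_eval] using heval

end QuotientNodes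

section Wronskian

variable {R : Type*} [CommRing R] {n : ℕ}

theorem coeff_X_pow_mul_iterate_derivative (f : R[X]) (i m : ℕ) :
    (X ^ i * derivative^[i] f).coeff m = f.coeff m * (descPochhammer R i).eval (m : R) := by
  rw [descPochhammer_eval_eq_descFactorial, coeff_X_pow_mul']
  split_ifs with h
  · rw [coeff_iterate_derivative, Nat.sub_add_cancel h, nsmul_eq_mul, mul_comm]
  · rw [Nat.descFactorial_eq_zero_iff_lt.2 (not_le.1 h), Nat.cast_zero, mul_zero]

theorem coeff_det_iterate_derivative [IsDomain R] (f : Fin n → R[X]) (d : ℕ) :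
    (of fun i s : Fin n => derivative^[i] (f s)).det.coeff d =
      ∑ e ∈ piAntidiag univ (d + ∑ i : Fin n, (i : ℕ)),
        (∏ i, (f i).coeff (e i)) * (vandermonde fun i => (e i : R)).det := by
  have hdet : (of fun i s : Fin n => derivative^[i] (f s)).det * X ^ (∑ i : Fin n, (i : ℕ)) =
      (of fun s i : Fin n => X ^ (i : ℕ) * derivative^[i] (f s)).det := by
    rw [← det_transpose, mul_comm, ← prod_pow_eq_pow_sum, ← det_mul_row]
    rfl
  rw [← coeff_mul_X_pow, hdet, coeff_det_eq_sum_piAntidiag]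
  refine sum_congr rfl fun e _ => ?_
  rw [det_eval_matrixOfPolynomials_eq_det_vandermonde _ (fun s => descPochhammer R s)
    (fun s => descPochhammer_natDegree R s) (fun s => monic_descPochhammer R s), ← det_mul_column]
  simp only [of_apply, coeff_X_pow_mul_iterate_derivative]

theorem sum_piAntidiag_eq_sum_sub_mul {M : Type*} [AddCommMonoid M] {N : Fin n → ℕ} {h d j : ℕ}
    (hh : 0 < h) (hd : d + j * h = ∑ i, N i) {F : (Fin n → ℕ) → M}
    (hF : ∀ e, F e ≠ 0 → ∀ i, ∃ m, e i + m * h = N i) :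
    ∑ e ∈ piAntidiag univ d, F e =
      ∑ r ∈ piAntidiag univ j with ∀ i, r i * h ≤ N i, F fun i => N i - r i * h := by
  symm
  refine sum_of_injOn (fun r i => N i - r i * h) ?_ ?_ ?_ fun _ _ => rfl
  · intro r hr r' hr' heq
    ext i
    have hi : N i - r i * h = N i - r' i * h := congrFun heq i
    refine Nat.eq_of_mul_eq_mul_right hh ?_
    have := (mem_filter.1 hr).2 i
    have := (mem_filter.1 hr').2 i
    omega
  · intro r hr
    obtain ⟨hrj, hle⟩ := mem_filter.1 hr
    have hsum : ∑ i, (N i - r i * h) + ∑ i, r i * h = ∑ i, N i := by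
      rw [← sum_add_distrib]
      exact sum_congr rfl fun i _ => Nat.sub_add_cancel (hle i)
    rw [← sum_mul, (mem_piAntidiag.1 hrj).1, ← hd, Nat.add_right_cancel_iff] at hsum
    exact mem_piAntidiag.2 ⟨hsum, fun i _ => mem_univ i⟩
  · intro e he hne
    by_contra hFe
    choose r hr using hF e hFe
    have hsum : ∑ i, e i + (∑ i, r i) * h = ∑ i, N i := by
      rw [sum_mul, ← sum_add_distrib]
      exact sum_congr rfl fun i _ => hr i
    rw [(mem_piAntidiag.1 he).1, ← hd, Nat.add_left_cancel_iff] at hsum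
    refine hne ⟨r, mem_coe.2 (mem_filter.2 ⟨mem_piAntidiag.2
      ⟨Nat.eq_of_mul_eq_mul_right hh hsum, fun i _ => mem_univ i⟩, fun i => ?_⟩),
      funext fun i => ?_⟩
    · exact (Nat.le_add_left _ _).trans_eq (hr i)
    · exact Nat.sub_eq_of_eq_add (hr i).symm

theorem coeff_det_iterate_derivative_eq_shiftSum [IsDomain R] {f : Fin n → R[X]} {N : Fin n → ℕ}
    {W : Fin n → ℕ → R} {h d j : ℕ} (hh : 0 < h)
    (hf : ∀ i e m, e + m * h = N i → (f i).coeff e = W i m)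
    (hf0 : ∀ i e, (f i).coeff e ≠ 0 → ∃ m, e + m * h = N i)
    (hW0 : ∀ i m, N i < m * h → W i m = 0) (hd : d + ∑ i : Fin n, (i : ℕ) + j * h = ∑ i, N i) :
    (of fun i s : Fin n => derivative^[i] (f s)).det.coeff d =
      shiftSum (h : R) W (fun i => (N i : R)) j := by
  have hle (r : Fin n → ℕ) (_ : r ∈ piAntidiag univ j)
      (hr : (∏ i, W i (r i)) * (vandermonde fun i => (N i : R) - r i * (h : R)).det ≠ 0) (i) :
      r i * h ≤ N i := by
    by_contra! hlt
    exact hr (by rw [prod_eq_zero (mem_univ i) (hW0 i _ hlt), zero_mul])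
  rw [coeff_det_iterate_derivative, sum_piAntidiag_eq_sum_sub_mul hh hd, shiftSum,
    ← sum_filter_of_ne hle]
  · refine sum_congr rfl fun r hr => ?_
    have hrN := (mem_filter.1 hr).2
    simp only [hf _ _ _ (Nat.sub_add_cancel (hrN _)), Nat.cast_sub (hrN _), Nat.cast_mul]
  · intro e he i
    exact hf0 i _ fun h0 => he (by rw [prod_eq_zero (mem_univ i) h0, zero_mul])

end Wronskian

section Hermite

/-- The coefficient of `X ^ (n - 2 * m)` in `hermite n`, as a polynomial in `n`. -/
noncomputable def hermiteWeight (m : ℕ) : ℚ[X] :=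
  C ((-1 / 2) ^ m / m.factorial : ℚ) * descPochhammer ℚ (2 * m)

theorem coeff_hermite_eq_hermiteWeight_eval (e m : ℕ) :
    ((hermite (e + m * 2)).map (Int.castRingHom ℚ)).coeff e =
      (hermiteWeight m).eval ((e + m * 2 : ℕ) : ℚ) := by
  have hdouble : ((2 * m - 1).doubleFactorial : ℚ) * (2 ^ m * m.factorial) =
      (2 * m).factorial := by
    rcases m with _ | m
    · simp
    · have hfac := Nat.factorial_eq_mul_doubleFactorial (2 * m + 1)
      have heven := Nat.doubleFactorial_two_mul (m + 1)
      exact_mod_cast (by rw [mul_comm, ← heven]; exact hfac.symm)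
  have hchoose : (2 * m + e).descFactorial (2 * m) = (2 * m).factorial * (2 * m + e).choose e := by
    rw [Nat.descFactorial_eq_factorial_mul_choose, Nat.choose_symm_add]
  rw [show e + m * 2 = 2 * m + e by ring, coeff_map, coeff_hermite_explicit, hermiteWeight,
    eval_C_mul, descPochhammer_eval_eq_descFactorial, hchoose, Nat.cast_mul, ← hdouble]
  have hfac : (m.factorial : ℚ) ≠ 0 := Nat.cast_ne_zero.2 m.factorial_ne_zero
  simp only [map_mul, map_pow, map_neg, map_one, Int.coe_castRingHom, Int.cast_natCast, div_pow]
  field_simp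

theorem hermiteWeight_eval_eq_zero {n m : ℕ} (h : n < m * 2) :
    (hermiteWeight m).eval (n : ℚ) = 0 := by
  rw [hermiteWeight, eval_C_mul, descPochhammer_eval_coe_nat_of_lt (mul_comm m 2 ▸ h), mul_zero]

theorem exists_add_mul_two_eq_of_coeff_hermite_ne_zero {n e : ℕ} (h : (hermite n).coeff e ≠ 0) :
    ∃ m, e + m * 2 = n := by
  have hle : e ≤ n := not_lt.1 fun hlt => h (coeff_hermite_of_lt hlt)
  have heven : Even (n + e) := Nat.not_odd_iff_even.1 fun hodd => h (coeff_hermite_of_odd_add hodd)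
  obtain ⟨r, hr⟩ := heven
  exact ⟨r - e, by omega⟩

theorem vanderQ_eq_det_vandermonde (l : List ℕ) :
    vanderQ l = (vandermonde fun i => (degVec l i : ℚ)).det := by
  rw [vanderQ, det_vandermonde]
  refine prod_congr rfl fun i _ => ?_
  rw [← prod_filter]
  exact prod_congr (by ext j; simp) fun _ _ => rfl

theorem sum_degVec (l : List ℕ) : ∑ i, degVec l i = l.sum + ∑ i : Fin l.length, (i : ℕ) := by
  have hrev : ∑ i : Fin l.length, (l.length - 1 - (i : ℕ)) = ∑ i : Fin l.length, (i : ℕ) := by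
    rw [Fin.sum_univ_eq_sum_range fun i => l.length - 1 - i, Fin.sum_univ_eq_sum_range fun i => i]
    exact sum_range_reflect (fun i => i) _
  simp only [degVec, sum_add_distrib, hrev]
  simp

/-- The shift ratio of the Hermite weights at the nodes `u`, each shift having length `2`; at the
degree vector of a partition it is a coefficient of the Wronskian Hermite polynomial. -/
noncomputable def hermiteShiftRatio {n : ℕ} (u : Fin n → ℕ) (j : ℕ) : ℚ :=
  shiftRatio 2 (fun i m => (hermiteWeight m).eval (u i : ℚ)) (fun i => (u i : ℚ)) j

theorem coeff_HeW {l : List ℕ} {j : ℕ} (hj : 2 * j ≤ l.sum) :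
    (HeW l).coeff (l.sum - 2 * j) = hermiteShiftRatio (degVec l) j := by
  rw [HeW, coeff_C_mul, vanderQ_eq_det_vandermonde, hermiteShiftRatio, shiftRatio,
    ← Nat.cast_ofNat (R := ℚ), coeff_det_iterate_derivative_eq_shiftSum (h := 2) two_pos,
    inv_mul_eq_div]
  · rintro i e m hem
    rw [← hem, coeff_hermite_eq_hermiteWeight_eval]
  · intro i e he
    refine exists_add_mul_two_eq_of_coeff_hermite_ne_zero fun h0 => he ?_
    rw [coeff_map, h0, map_zero]
  · exact fun i m => hermiteWeight_eval_eq_zero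
  · rw [sum_degVec]
    omega

end Hermite

section NodeReduction

variable {m n p q : ℕ}

theorem hermiteShiftRatio_eq_of_range_eq {u : Fin m → ℕ} {v : Fin n → ℕ}
    (hu : Function.Injective u) (hv : Function.Injective v) (huv : Set.range u = Set.range v)
    (j : ℕ) : hermiteShiftRatio u j = hermiteShiftRatio v j := by
  let e : Fin m ≃ Fin n :=
    (Equiv.ofInjective u hu).trans ((Equiv.setCongr huv).trans (Equiv.ofInjective v hv).symm)
  have he (i) : v (e i) = u i := Equiv.apply_ofInjective_symm hv _
  rw [hermiteShiftRatio, hermiteShiftRatio, ← shiftRatio_comp_equiv e]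
  simp only [he]

theorem cast_append {R : Type*} [NatCast R] (x : Fin m → ℕ) (y : Fin n → ℕ) :
    (fun i => ((Fin.append x y i : ℕ) : R)) =
      Fin.append (fun i => (x i : R)) fun i => (y i : R) := by
  ext i
  induction i using Fin.addCases <;> simp

theorem hermiteWeight_zero : hermiteWeight 0 = 1 := by
  simp [hermiteWeight]

theorem mul_two_le_of_hermiteWeight_eval_ne_zero {x d : ℕ}
    (h : (hermiteWeight d).eval (x : ℚ) ≠ 0) : d * 2 ≤ x :=
  not_lt.1 fun hlt => h (hermiteWeight_eval_eq_zero hlt)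

theorem hermiteShiftRatio_append_of_closed {b : Fin m → ℕ} {u : Fin n → ℕ} {W : Fin n → ℕ → ℚ}
    (hinj : Function.Injective (Fin.append b u)) (hb : ∀ i d, d * 2 ≤ b i → ∃ k, b k + d * 2 = b i)
    (hW : ∀ t d, (hermiteWeight d).eval (u t : ℚ) * ∏ i, ((u t : ℚ) - d * 2 - b i) =
      W t d * ∏ i, ((u t : ℚ) - b i)) (j : ℕ) :
    hermiteShiftRatio (Fin.append b u) j = shiftRatio 2 W (fun t => (u t : ℚ)) j := by
  have hinj_cast : Function.Injective (Fin.append (fun i => (b i : ℚ)) fun t => (u t : ℚ)) := by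
    rw [← cast_append]
    exact Nat.cast_injective.comp hinj
  rw [hermiteShiftRatio, cast_append]
  refine shiftRatio_append_of_closed two_ne_zero hinj_cast (fun i => ?_) (fun i d hne => ?_)
    (fun t d => ?_) j
  · simp [hermiteWeight_zero]
  · rw [Fin.append_left] at hne
    obtain ⟨k, hk⟩ := hb i d (mul_two_le_of_hermiteWeight_eval_ne_zero hne)
    exact ⟨k, by rw [← hk]; push_cast; ring⟩
  · rw [Fin.append_right]
    exact hW t d

theorem append_val_add_injective {z : ℕ} {u : Fin n → ℕ} (hu : Function.Injective u) :
    Function.Injective (Fin.append (fun t : Fin z => (t : ℕ)) fun i => u i + z) :=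
  Fin.append_injective_iff.2 ⟨Fin.val_injective, fun i k h => hu (Nat.add_right_cancel h),
    fun t i => by have := t.2; omega⟩

theorem hermiteShiftRatio_append_range {z : ℕ} {u : Fin n → ℕ} (hu : Function.Injective u) (j : ℕ) :
    hermiteShiftRatio (Fin.append (fun t : Fin z => (t : ℕ)) fun i => u i + z) j =
      hermiteShiftRatio u j := by
  have prod_sub_val (x : ℚ) : ∏ t : Fin z, (x - (t : ℕ)) = (descPochhammer ℚ z).eval x := by
    rw [descPochhammer_eval_eq_prod_range, prod_range]
  rw [hermiteShiftRatio_append_of_closed (W := fun t d => (hermiteWeight d).eval (u t : ℚ))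
    (append_val_add_injective hu)]
  · simpa [hermiteShiftRatio] using shiftRatio_affine one_ne_zero (z : ℚ) 2
      (fun t d => (hermiteWeight d).eval (u t : ℚ)) (fun t => (u t : ℚ)) j
  · exact fun i d hd => ⟨⟨i - d * 2, by omega⟩, Nat.sub_add_cancel hd⟩
  · intro t d
    have hcomm := descPochhammer_eval_mul_eval_sub_comm ((u t + z : ℕ) : ℚ) (2 * d) z
    rw [show ((u t + z : ℕ) : ℚ) - ((2 * d : ℕ) : ℚ) = (u t + z : ℕ) - d * 2 by push_cast; ring,
      show ((u t + z : ℕ) : ℚ) - z = u t by push_cast; ring] at hcomm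
    simp only [prod_sub_val, hermiteWeight, eval_C_mul]
    linear_combination (-1 / 2) ^ d / (d.factorial : ℚ) * hcomm

theorem descPochhammer_two_mul_eval (x : ℚ) (d : ℕ) : (descPochhammer ℚ (2 * d)).eval (2 * x) =
    4 ^ d * (descPochhammer ℚ d).eval x * (descPochhammer ℚ d).eval (x - 1 / 2) := by
  induction d with
  | zero => simp
  | succ d ih =>
    rw [mul_add_one, descPochhammer_succ_eval, descPochhammer_succ_eval, ih,
      descPochhammer_succ_eval, descPochhammer_succ_eval]
    push_cast
    ring

theorem hermiteWeight_eval_two_mul (x : ℚ) (d : ℕ) : (hermiteWeight d).eval (2 * x) =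
    (-2) ^ d / d.factorial * (descPochhammer ℚ d).eval x *
      (descPochhammer ℚ d).eval (x - 1 / 2) := by
  have hpow : (-2 : ℚ) ^ d = (-1 / 2) ^ d * 4 ^ d := by rw [← mul_pow]; norm_num
  rw [hermiteWeight, eval_C_mul, descPochhammer_two_mul_eval, hpow]
  ring

/-- The first `q` even and the first `K` odd numbers. -/
def bottomNodes (q K : ℕ) : Fin (q + K) → ℕ :=
  Fin.append (fun t => 2 * t) fun t => 2 * t + 1

/-- The entries of a 2-runner abacus above its `bottomNodes q K`, with positions `a` on the even
and `b` on the odd runner. -/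
def topNodes (K : ℕ) (a : Fin p → ℕ) (b : Fin q → ℕ) : Fin (p + q) → ℕ :=
  Fin.append (fun i => 2 * (a i + q)) fun i => 2 * (b i + K) + 1

theorem cast_topNodes (K : ℕ) (a : Fin p → ℕ) (b : Fin q → ℕ) (i : Fin (p + q)) :
    (topNodes K a b i : ℚ) = 2 * quotientNodes (K - q + 1 / 2 : ℚ) a b i + 2 * q := by
  induction i using Fin.addCases <;> simp [topNodes, quotientNodes] <;> ring

theorem exists_bottomNodes_add_eq {K : ℕ} (i : Fin (q + K)) {d : ℕ}
    (hd : d * 2 ≤ bottomNodes q K i) : ∃ k, bottomNodes q K k + d * 2 = bottomNodes q K i := by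
  induction i using Fin.addCases with
  | left t =>
    simp only [bottomNodes, Fin.append_left] at hd ⊢
    exact ⟨Fin.castAdd K ⟨t - d, by omega⟩, by rw [Fin.append_left]; dsimp only; omega⟩
  | right t =>
    simp only [bottomNodes, Fin.append_right] at hd ⊢
    exact ⟨Fin.natAdd q ⟨t - d, by omega⟩, by rw [Fin.append_right]; dsimp only; omega⟩

theorem prod_sub_bottomNodes (K : ℕ) (x : ℚ) : ∏ i, (2 * x - bottomNodes q K i) =
    2 ^ (q + K) * (descPochhammer ℚ q).eval x * (descPochhammer ℚ K).eval (x - 1 / 2) := by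
  have even_factor (t : ℕ) : 2 * x - (2 * t : ℕ) = 2 * (x - t) := by push_cast; ring
  have odd_factor (t : ℕ) : 2 * x - (2 * t + 1 : ℕ) = 2 * (x - 1 / 2 - t) := by push_cast; ring
  simp only [bottomNodes, Fin.prod_univ_add, Fin.append_left, Fin.append_right, even_factor,
    odd_factor, prod_mul_distrib, prod_const, card_univ, Fintype.card_fin,
    descPochhammer_eval_eq_prod_range, prod_range]
  ring

theorem hermiteWeight_mul_prod_sub_bottomNodes (K : ℕ) (v : ℚ) (d : ℕ) :
    (hermiteWeight d).eval (2 * v + 2 * q) * ∏ i, (2 * v + 2 * q - d * 2 - bottomNodes q K i) =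
      (quotientWeight (K - q + 1 / 2 : ℚ) d).eval v *
        ∏ i, (2 * v + 2 * q - bottomNodes q K i) := by
  have heven := descPochhammer_eval_mul_eval_sub_comm (v + q) d q
  have hodd := descPochhammer_eval_mul_eval_sub_comm (v + q - 1 / 2) d K
  rw [show v + q - q = v by ring] at heven
  rw [show v + q - 1 / 2 - K = v - (K - q + 1 / 2) by ring] at hodd
  rw [show 2 * v + 2 * q - d * 2 = 2 * (v + q - d) by ring, ← mul_add, prod_sub_bottomNodes,
    prod_sub_bottomNodes, hermiteWeight_eval_two_mul, quotientWeight_eval,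
    show v + q - d - 1 / 2 = v + q - 1 / 2 - d by ring]
  simp only [Algebra.algebraMap_self, RingHom.id_apply]
  linear_combination (-2) ^ d / (d.factorial : ℚ) * 2 ^ (q + K) *
    ((descPochhammer ℚ d).eval (v + q - 1 / 2) *
      (descPochhammer ℚ K).eval (v + q - 1 / 2 - d) * heven +
      (descPochhammer ℚ q).eval (v + q) * (descPochhammer ℚ d).eval v * hodd)

theorem append_bottomNodes_topNodes_injective {a : Fin p → ℕ} {b : Fin q → ℕ}
    (ha : Function.Injective a) (hb : Function.Injective b) (K : ℕ) :
    Function.Injective (Fin.append (bottomNodes q K) (topNodes K a b)) := by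
  have hbottom : Function.Injective (bottomNodes q K) := by
    refine Fin.append_injective_iff.2 ⟨fun s t h => ?_, fun s t h => ?_, fun s t => ?_⟩ <;>
      beta_reduce at * <;> omega
  have htop : Function.Injective (topNodes K a b) := by
    refine Fin.append_injective_iff.2 ⟨fun s t h => ha ?_, fun s t h => hb ?_, fun s t => ?_⟩ <;>
      beta_reduce at * <;> omega
  refine Fin.append_injective_iff.2 ⟨hbottom, htop, fun s t => ?_⟩
  induction s using Fin.addCases <;> induction t using Fin.addCases <;>
    simp only [bottomNodes, topNodes, Fin.append_left, Fin.append_right] <;> omega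

theorem quotientNodes_injective {a : Fin p → ℕ} {b : Fin q → ℕ} (ha : Function.Injective a)
    (hb : Function.Injective b) (K : ℕ) :
    Function.Injective (quotientNodes (K - q + 1 / 2 : ℚ) a b) := by
  intro s t h
  have htop := (Fin.append_injective_iff.1 (append_bottomNodes_topNodes_injective ha hb K)).2.1
  exact htop (Nat.cast_injective (R := ℚ) (by rw [cast_topNodes, cast_topNodes, h]))

theorem hermiteShiftRatio_append_bottomNodes_topNodes {a : Fin p → ℕ} {b : Fin q → ℕ}
    (ha : Function.Injective a) (hb : Function.Injective b) (K j : ℕ) :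
    hermiteShiftRatio (Fin.append (bottomNodes q K) (topNodes K a b)) j =
      shiftRatio 1 (fun i m => (quotientWeight (K - q + 1 / 2 : ℚ) m).eval
        (quotientNodes (K - q + 1 / 2 : ℚ) a b i)) (quotientNodes (K - q + 1 / 2 : ℚ) a b) j := by
  rw [hermiteShiftRatio_append_of_closed (append_bottomNodes_topNodes_injective ha hb K)
    (fun i d => exists_bottomNodes_add_eq i)
    (W := fun i m => (quotientWeight (K - q + 1 / 2 : ℚ) m).eval
        (quotientNodes (K - q + 1 / 2 : ℚ) a b i)) fun t d => ?_]
  · simp only [cast_topNodes]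
    simpa only [mul_one] using shiftRatio_affine two_ne_zero (2 * q : ℚ) 1 _ _ j
  · rw [cast_topNodes]
    exact hermiteWeight_mul_prod_sub_bottomNodes K _ d

end NodeReduction

section DegreeSets

variable {l : List ℕ}

theorem degVec_injective (hl : l.Pairwise (· ≥ ·)) : Function.Injective (degVec l) := by
  have hanti : StrictAnti (degVec l) := fun i k hik => by
    have hget : l.get i ≥ l.get k := List.pairwise_iff_get.1 hl i k hik
    have : (i : ℕ) < k := hik
    simp only [degVec]
    omega
  exact hanti.injective

theorem exists_filter_pos_append_replicate_zero (hl : l.Pairwise (· ≥ ·)) :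
    ∃ z, l.filter (0 < ·) ++ List.replicate z 0 = l := by
  induction l with
  | nil => exact ⟨0, rfl⟩
  | cons x l ih =>
    obtain ⟨hx, hl⟩ := List.pairwise_cons.1 hl
    rcases x.eq_zero_or_pos with rfl | hpos
    · have hzero : ∀ y ∈ 0 :: l, y = 0 := by simpa using hx
      refine ⟨l.length + 1, ?_⟩
      rw [List.filter_eq_nil_iff.2 fun y hy => by simp [hzero y hy], List.nil_append]
      exact (List.eq_replicate_of_mem hzero).symm
    · obtain ⟨z, hz⟩ := ih hl
      exact ⟨z, by simpa [hpos] using hz⟩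

theorem degVec_append_replicate_zero (l : List ℕ) (z : ℕ)
    (i : Fin (l ++ List.replicate z 0).length) : degVec (l ++ List.replicate z 0) i =
      if h : i < l.length then degVec l ⟨i, h⟩ + z else l.length + z - 1 - i := by
  rw [degVec, List.get_eq_getElem, List.getElem_append]
  split_ifs with h <;> simp [degVec]
  omega

theorem range_degVec_append_replicate_zero (l : List ℕ) (z : ℕ) :
    Set.range (degVec (l ++ List.replicate z 0)) =
      Set.range (Fin.append (fun t : Fin z => (t : ℕ)) fun i => degVec l i + z) := by
  have hlen : (l ++ List.replicate z 0).length = l.length + z := by simp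
  apply Set.Subset.antisymm <;> rintro _ ⟨i, rfl⟩
  · rw [degVec_append_replicate_zero]
    split_ifs with h
    · exact ⟨Fin.natAdd z ⟨i, h⟩, by rw [Fin.append_right]⟩
    · exact ⟨Fin.castAdd _ ⟨l.length + z - 1 - i, by omega⟩, by rw [Fin.append_left]⟩
  · induction i using Fin.addCases with
    | left t =>
      refine ⟨⟨l.length + z - 1 - t, by omega⟩, ?_⟩
      rw [degVec_append_replicate_zero, dif_neg (by dsimp only; omega), Fin.append_left]
      dsimp only
      omega
    | right i =>
      exact ⟨⟨i, by omega⟩, by rw [degVec_append_replicate_zero, dif_pos i.2, Fin.append_right]⟩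

theorem hermiteShiftRatio_degVec_filter_pos (hl : l.Pairwise (· ≥ ·)) (j : ℕ) :
    hermiteShiftRatio (degVec (l.filter (0 < ·))) j = hermiteShiftRatio (degVec l) j := by
  obtain ⟨z, hz⟩ := exists_filter_pos_append_replicate_zero hl
  have hinj := degVec_injective (hl.filter (0 < ·))
  rw [← hermiteShiftRatio_append_range (z := z) hinj]
  refine hermiteShiftRatio_eq_of_range_eq (append_val_add_injective hinj) (degVec_injective hl) ?_ j
  rw [← range_degVec_append_replicate_zero, hz]

theorem sum_filter_pos (l : List ℕ) : (l.filter (0 < ·)).sum = l.sum := by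
  induction l with
  | nil => rfl
  | cons x l ih => rcases x.eq_zero_or_pos with rfl | hx <;> simp [*]

/-- The weakly decreasing list, trailing zeros included, whose degree vector enumerates `D`. -/
def partsOf (D : Finset ℕ) : List ℕ :=
  ((List.range (D.sort (· ≤ ·)).length).map fun t => (D.sort (· ≤ ·)).getD t 0 - t).reverse

theorem length_partsOf (D : Finset ℕ) : (partsOf D).length = #D := by
  simp [partsOf]

theorem getElem_partsOf (D : Finset ℕ) {i : ℕ} (hi : i < (partsOf D).length) :
    (partsOf D)[i] = D.orderEmbOfFin rfl (Fin.rev ⟨i, length_partsOf D ▸ hi⟩) - (#D - (i + 1)) := by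
  have hlt : #D - 1 - i < #D := by have := length_partsOf D; omega
  simp only [partsOf, List.getElem_reverse, List.getElem_map, List.getElem_range, List.length_map,
    List.length_range, length_sort, orderEmbOfFin_apply]
  rw [List.getD_eq_getElem _ _ (by simpa using hlt)]
  simp only [Fin.getElem_fin, Fin.val_rev, Nat.sub_sub, add_comm]

theorem add_sub_le_of_strictMono {n : ℕ} {f : Fin n → ℕ} (hf : StrictMono f) {i k : Fin n}
    (hik : i ≤ k) : f i + (k - i) ≤ f k := by
  have hmaps : Set.MapsTo f (Ico i k : Finset (Fin n)) (Ico (f i) (f k) : Finset ℕ) := by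
    intro t ht
    simp only [coe_Ico, Set.mem_Ico] at ht ⊢
    exact ⟨hf.monotone ht.1, hf ht.2⟩
  have hcard := card_le_card_of_injOn f hmaps hf.injective.injOn
  rw [Fin.card_Ico, Nat.card_Ico] at hcard
  have := hf.monotone hik
  omega

theorem val_le_of_strictMono {n : ℕ} {f : Fin n → ℕ} (hf : StrictMono f) (i : Fin n) :
    i ≤ f i :=
  (Nat.le_add_left _ _).trans
    (add_sub_le_of_strictMono hf (show (⟨0, i.pos⟩ : Fin n) ≤ i from Nat.zero_le _))

theorem partsOf_pairwise (D : Finset ℕ) : (partsOf D).Pairwise (· ≥ ·) := by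
  refine List.pairwise_iff_getElem.2 fun i k hi hk hik => ?_
  have hlen := length_partsOf D
  have hrev : Fin.rev ⟨k, hlen ▸ hk⟩ ≤ Fin.rev ⟨i, hlen ▸ hi⟩ := Fin.rev_le_rev.2 hik.le
  have hgap := add_sub_le_of_strictMono (D.orderEmbOfFin rfl).strictMono hrev
  rw [getElem_partsOf, getElem_partsOf]
  simp only [Fin.val_rev] at hgap
  omega

theorem degVec_partsOf (D : Finset ℕ) (i : Fin (partsOf D).length) :
    degVec (partsOf D) i = D.orderEmbOfFin rfl (i.cast (length_partsOf D)).rev := by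
  have hlen := length_partsOf D
  have hle := val_le_of_strictMono (D.orderEmbOfFin rfl).strictMono (i.cast hlen).rev
  have hget := getElem_partsOf D i.2
  rw [degVec, List.get_eq_getElem, hget]
  simp only [Fin.val_rev, Fin.val_cast] at hle
  change D.orderEmbOfFin rfl (i.cast hlen).rev - _ + _ = _
  omega

theorem range_degVec_partsOf (D : Finset ℕ) : Set.range (degVec (partsOf D)) = D := by
  have hcomp : degVec (partsOf D) =
      D.orderEmbOfFin rfl ∘ Fin.rev ∘ Fin.cast (length_partsOf D) :=
    funext (degVec_partsOf D)
  rw [hcomp, Function.Surjective.range_comp, range_orderEmbOfFin]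
  exact Fin.rev_surjective.comp (finCongr (length_partsOf D)).surjective

theorem sum_partsOf_add (D : Finset ℕ) :
    (partsOf D).sum + ∑ i : Fin #D, (i : ℕ) = ∑ d ∈ D, d := by
  have hD : univ.image (degVec (partsOf D)) = D := by
    rw [← coe_inj, coe_image, coe_univ, Set.image_univ, range_degVec_partsOf]
  calc (partsOf D).sum + ∑ i : Fin #D, (i : ℕ) = ∑ i, degVec (partsOf D) i := by
        rw [sum_degVec, length_partsOf]
    _ = ∑ d ∈ D, d := by
        conv_rhs => rw [← hD]
        exact (sum_image (f := id) (degVec_injective (partsOf_pairwise D)).injOn).symm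

end DegreeSets

section Phi

theorem image_append {α : Type*} [DecidableEq α] {m n : ℕ} (x : Fin m → α) (y : Fin n → α) :
    univ.image (Fin.append x y) = univ.image x ∪ univ.image y := by
  ext d
  simp only [mem_image, mem_univ, true_and, mem_union]
  constructor
  · rintro ⟨i, rfl⟩
    induction i using Fin.addCases <;> simp
  · rintro (⟨i, rfl⟩ | ⟨i, rfl⟩)
    exacts [⟨_, Fin.append_left x y i⟩, ⟨_, Fin.append_right x y i⟩]

theorem two_mul_sum_val_add (n : ℕ) : 2 * ∑ i : Fin n, (i : ℕ) + n = n ^ 2 := by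
  induction n with
  | zero => rfl
  | succ n ih =>
    rw [Fin.sum_univ_castSucc]
    simp only [Fin.val_castSucc, Fin.val_last]
    linarith

theorem sum_bottomNodes_add (q K : ℕ) : ∑ i, bottomNodes q K i + q = q ^ 2 + K ^ 2 := by
  simp only [bottomNodes, Fin.sum_univ_add, Fin.append_left, Fin.append_right, sum_add_distrib,
    ← mul_sum, sum_const, card_univ, Fintype.card_fin, smul_eq_mul]
  linarith [two_mul_sum_val_add q, two_mul_sum_val_add K]

theorem sum_topNodes {p q : ℕ} (K : ℕ) (a : Fin p → ℕ) (b : Fin q → ℕ) :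
    ∑ i, topNodes K a b i = 2 * (∑ i, a i + p * q) + 2 * (∑ i, b i + q * K) + q := by
  simp only [topNodes, Fin.sum_univ_add, Fin.append_left, Fin.append_right, sum_add_distrib,
    ← mul_sum, sum_const, card_univ, Fintype.card_fin, smul_eq_mul]
  ring

variable (μ ν : List ℕ) (k : ℕ)

/-- The positions `{d_1, …, d_N}` from which `Phi μ ν k` is built, the closed block of bottom
entries first. -/
def phiNodes : Fin (ν.length + (μ.length + k) + (μ.length + ν.length)) → ℕ :=
  Fin.append (bottomNodes ν.length (μ.length + k))
    (topNodes (μ.length + k) (degVec μ) (degVec ν))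

theorem Phi_eq_filter_partsOf :
    Phi μ ν k = (partsOf (univ.image (phiNodes μ ν k))).filter (0 < ·) := by
  refine congrArg (fun D => (partsOf D).filter (0 < ·)) (ext fun d => ?_)
  simp only [phiNodes, bottomNodes, topNodes, image_append, mem_union, mem_image, mem_univ,
    true_and, mem_range, Fin.exists_iff, exists_prop, add_assoc]
  simp only [or_assoc, or_left_comm, or_comm]

variable {μ ν}

theorem phiNodes_injective (hμ : μ.Pairwise (· ≥ ·)) (hν : ν.Pairwise (· ≥ ·)) :
    Function.Injective (phiNodes μ ν k) :=
  append_bottomNodes_topNodes_injective (degVec_injective hμ) (degVec_injective hν) _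

theorem sum_phiNodes : ∑ i, phiNodes μ ν k i = k * (k + 1) / 2 + 2 * (μ.sum + ν.sum) +
    ∑ i : Fin (ν.length + (μ.length + k) + (μ.length + ν.length)), (i : ℕ) := by
  have hsplit : ∑ i, phiNodes μ ν k i = ∑ i, bottomNodes ν.length (μ.length + k) i +
      ∑ i, topNodes (μ.length + k) (degVec μ) (degVec ν) i := by
    rw [Fin.sum_univ_add]
    simp only [phiNodes, Fin.append_left, Fin.append_right]
  rw [sum_topNodes, sum_degVec, sum_degVec] at hsplit
  have hdouble : 2 * ∑ i, phiNodes μ ν k i = k * (k + 1) + 4 * (μ.sum + ν.sum) +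
      2 * ∑ i : Fin (ν.length + (μ.length + k) + (μ.length + ν.length)), (i : ℕ) := by
    linarith [sum_bottomNodes_add ν.length (μ.length + k), two_mul_sum_val_add μ.length,
      two_mul_sum_val_add ν.length,
      two_mul_sum_val_add (ν.length + (μ.length + k) + (μ.length + ν.length))]
  omega

theorem sum_Phi (hμ : μ.Pairwise (· ≥ ·)) (hν : ν.Pairwise (· ≥ ·)) :
    (Phi μ ν k).sum = k * (k + 1) / 2 + 2 * (μ.sum + ν.sum) := by
  have hinj := phiNodes_injective k hμ hν
  have hsum := sum_partsOf_add (univ.image (phiNodes μ ν k))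
  rw [sum_image hinj.injOn, card_image_of_injective _ hinj, card_univ, Fintype.card_fin,
    ← sum_filter_pos, ← Phi_eq_filter_partsOf, sum_phiNodes] at hsum
  exact Nat.add_right_cancel hsum

theorem coeff_HeW_Phi (hμ : μ.Pairwise (· ≥ ·)) (hν : ν.Pairwise (· ≥ ·)) {j : ℕ}
    (hj : 2 * j ≤ (Phi μ ν k).sum) :
    (HeW (Phi μ ν k)).coeff ((Phi μ ν k).sum - 2 * j) = hermiteShiftRatio (phiNodes μ ν k) j := by
  rw [coeff_HeW hj, Phi_eq_filter_partsOf, hermiteShiftRatio_degVec_filter_pos (partsOf_pairwise _)]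
  refine hermiteShiftRatio_eq_of_range_eq (degVec_injective (partsOf_pairwise _))
    (phiNodes_injective k hμ hν) ?_ j
  rw [range_degVec_partsOf, coe_image, coe_univ, Set.image_univ]

theorem exists_polynomial_hermiteShiftRatio_phiNodes (hμ : μ.Pairwise (· ≥ ·))
    (hν : ν.Pairwise (· ≥ ·)) (j : ℕ) :
    ∃ P : ℚ[X], HasTopCoeff P j (2 ^ j * ∑ l ∈ range (j + 1),
        (-1 : ℚ) ^ l * μ.sum.choose (j - l) * ν.sum.choose l) ∧
      ∀ k : ℕ, hermiteShiftRatio (phiNodes μ ν k) j = P.eval (k : ℚ) := by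
  have ha := degVec_injective hμ
  have hb := degVec_injective hν
  obtain ⟨P, hP, hPeval⟩ :=
    exists_polynomial_shiftRatio_quotientNodes ha hb (sum_degVec μ) (sum_degVec ν) j
  let c : ℚ := μ.length - ν.length + 1 / 2
  refine ⟨P.comp (X + C c), hP.comp_X_add_C c, fun k => ?_⟩
  have hγ : (μ.length + k : ℕ) - ν.length + 1 / 2 = (k + c : ℚ) := by
    simp only [c]
    push_cast
    ring
  rw [phiNodes, hermiteShiftRatio_append_bottomNodes_topNodes ha hb,
    hPeval _ (quotientNodes_injective ha hb _), hγ, eval_comp, eval_add, eval_X, eval_C]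

end Phi

end WronskianHermite

/-- For a fixed 2-quotient `(μ,ν)`, the `j`-th coefficient of the remainder polynomial
of `He_{Φ(μ,ν,k)}` (i.e. the coefficient of `X^{N_k − 2j}` where
`N_k = k(k+1)/2 + 2(|μ|+|ν|) = |Φ(μ,ν,k)|`) is a polynomial in the core length `k`
of degree at most `j`, whose coefficient of `X^j` is
`2^j · Σ_{l=0}^{j} (−1)^l C(|μ|, j−l) C(|ν|, l)`. -/
theorem wronskianHermite_coeff_polynomial_in_coreLength (μ ν : List ℕ)
    (hμ : IsPartition μ) (hν : IsPartition ν) (j : ℕ) (hj : j ≤ μ.sum + ν.sum) :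
    ∃ P : Polynomial ℚ, P.natDegree ≤ j ∧
      P.coeff j = 2 ^ j * ∑ l ∈ Finset.range (j + 1),
        (-1 : ℚ) ^ l * (μ.sum.choose (j - l) : ℚ) * (ν.sum.choose l : ℚ) ∧
      ∀ k : ℕ,
        (HeW (Phi μ ν k)).coeff (k * (k + 1) / 2 + 2 * (μ.sum + ν.sum) - 2 * j) =
          P.eval (k : ℚ) := by
  obtain ⟨P, hP, hPeval⟩ :=
    WronskianHermite.exists_polynomial_hermiteShiftRatio_phiNodes hμ.1 hν.1 j
  refine ⟨P, hP.1, hP.2, fun k => ?_⟩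
  have hsum := WronskianHermite.sum_Phi k hμ.1 hν.1
  rw [← hPeval, ← WronskianHermite.coeff_HeW_Phi k hμ.1 hν.1 (by omega), hsum]
end

section
/- Fix partitions μ and ν and set d = |μ| + |ν|. For each integer k ≥ 0 define the remainder polynomial R_k ∈ ℚ[X] of λ_k = Φ(μ,ν,k) by R_k := Σ_{t=0}^{d} coeff_{k(k+1)/2 + 2t}(He_{λ_k}) · X^t (so that He_{λ_k}(X) = X^{k(k+1)/2} R_k(X²)). Then for every compact subset K of ℂ, the functions x ↦ R_k(2kx)/(2k)^d converge uniformly on K, as k → ∞, to the polynomial (x+1)^{|μ|} · (x−1)^{|ν|}. -/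
/-- The remainder polynomial `R_k` of `λ_k = Φ(μ,ν,k)`:
`R_k = Σ_{t=0}^{|μ|+|ν|} coeff_{k(k+1)/2 + 2t}(He_{λ_k}) · X^t`,
so that `He_{λ_k}(X) = X^{k(k+1)/2} R_k(X²)`. -/
noncomputable def remainderPoly (μ ν : List ℕ) (k : ℕ) : Polynomial ℚ :=
  ∑ t ∈ Finset.range (μ.sum + ν.sum + 1),
    Polynomial.C ((HeW (Phi μ ν k)).coeff (k * (k + 1) / 2 + 2 * t)) *
      Polynomial.X ^ t

/-!
Dividing the Wronskian of `He_{n_1}, …, He_{n_ℓ}` by the Vandermonde determinant of `n` and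
reversing the powers gives a polynomial `P_n` with constant term `1` and
`P_n' = -1/2 * ∑ j, w_j * P_{n - 2 e_j}`, where `w_j` is the weight of removing a domino through the
`j`-th entry. If `n` has 2-quotient `(α, β)`, the dominoes that can be removed correspond to the
boxes of the two quotient partitions, and as the 2-core grows, `w_j / (2 k)` tends to `-2` (for
`α`) or `2` (for `β`) times the weight of removing that box. The box weights of a partition sum to
its size, so the limits of the rescaled coefficients satisfy
`(s + 1) * c_{s+1}(m, n) = m * c_s(m - 1, n) - n * c_s(m, n - 1)` and `c_0 = 1`. By Euler's identity
for the homogenization of `(x + 1) ^ m * (x - 1) ^ n`, so do the coefficients of that polynomial,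
read from the top.
-/

namespace HermiteWronskian

open Polynomial Filter Topology

/-! ### Falling factorials and Lagrange interpolation -/

section

theorem sum_fin_val (N : ℕ) : ∑ i : Fin N, (i : ℕ) = N.choose 2 := by
  rw [Fin.sum_univ_eq_sum_range fun i => i, Finset.sum_range_id, Nat.choose_two_right]

theorem exists_equiv_comp_eq {X Y Z : Type*} {f : X → Z} {g : Y → Z} (hf : Function.Injective f)
    (hg : Function.Injective g) (h : Set.range f = Set.range g) : ∃ e : X ≃ Y, g ∘ e = f := by
  refine ⟨(Equiv.ofInjective f hf).trans ((Equiv.setCongr h).trans (Equiv.ofInjective g hg).symm),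
    _root_.funext fun i => ?_⟩
  simp [Equiv.apply_ofInjective_symm hg]

theorem injective_update {X Y : Type*} [DecidableEq X] {f : X → Y} (hf : Function.Injective f)
    {j : X} {y : Y} (h : ∀ i, i ≠ j → f i ≠ y) : Function.Injective (Function.update f j y) := by
  intro a b hab
  by_cases ha : a = j <;> by_cases hb : b = j <;>
    simp only [ha, hb, Function.update_self, Function.update_of_ne, ne_eq,
      not_false_eq_true] at hab ⊢
  · exact absurd hab.symm (h b hb)
  · exact absurd hab (h a ha)
  · exact hf hab

variable {ι : Type*} [Fintype ι] [DecidableEq ι]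

theorem derivative_det {R : Type*} [CommRing R] (M : Matrix ι ι R[X]) :
    derivative M.det = ∑ j, (M.updateCol j fun i => derivative (M i j)).det := by
  simp_rw [Matrix.det_apply, derivative_sum, Units.smul_def, derivative_smul,
    derivative_prod_finset, Finset.smul_sum]
  rw [Finset.sum_comm]
  refine Finset.sum_congr rfl fun j _ => Finset.sum_congr rfl fun σ _ => ?_
  rw [← Finset.mul_prod_erase Finset.univ _ (Finset.mem_univ j), mul_comm, Matrix.updateCol_self]
  congr 2
  exact Finset.prod_congr rfl fun i hi => by rw [Matrix.updateCol_ne (Finset.ne_of_mem_erase hi)]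

theorem descPochhammer_eval_shift {R : Type*} [CommRing R] (i : ℕ) (x : R) :
    x * (descPochhammer R i).eval (x - 1) = (x - i) * (descPochhammer R i).eval x := by
  have h := congrArg (eval x) (descPochhammer_succ_left R i)
  rw [descPochhammer_succ_eval] at h
  simpa [mul_comm] using h.symm

theorem eq_sum_lagrangeBasis {F : Type*} [Field F] {v : ι → F} (hv : Function.Injective v)
    {p : F[X]} (hp : p.degree < Fintype.card ι) :
    p = ∑ l, C (p.eval (v l)) * Lagrange.basis Finset.univ v l := by
  rw [← Lagrange.interpolate_apply]
  exact Lagrange.eq_interpolate hv.injOn hp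

theorem degree_descPochhammer_lt (R : Type*) [CommRing R] [IsDomain R] {N : ℕ} (i : Fin N) :
    (descPochhammer R i).degree < Fintype.card (Fin N) :=
  degree_le_natDegree.trans_lt (by simp [descPochhammer_natDegree])

theorem det_descPochhammer_eval {R : Type*} [CommRing R] [IsDomain R] {N : ℕ} (v : Fin N → R) :
    (Matrix.of fun i j : Fin N => (descPochhammer R i).eval (v j)).det =
      (Matrix.vandermonde v).det := by
  rw [← Matrix.det_transpose, Matrix.det_eval_matrixOfPolynomials_eq_det_vandermonde v
    (fun i => descPochhammer R i) (fun i => descPochhammer_natDegree R i)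
    (fun i => monic_descPochhammer R i)]
  rfl

-- The left-hand side is the trace, in the Lagrange basis, of the operator `p ↦ X * p(X - 1)` on
-- functions on the nodes; falling factorials make that operator visibly similar to
-- `diagonal v - diagonal (0, …, N - 1)`.
theorem sum_mul_eval_lagrangeBasis {F : Type*} [Field F] {N : ℕ} {v : Fin N → F}
    (hv : Function.Injective v) :
    ∑ j, v j * (Lagrange.basis Finset.univ v j).eval (v j - 1) =
      ∑ j, v j - ∑ i : Fin N, (i : F) := by
  set A : Matrix (Fin N) (Fin N) F := Matrix.of fun i j => (descPochhammer F i).eval (v j) with hA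
  set M : Matrix (Fin N) (Fin N) F :=
    Matrix.of fun l j => v j * (Lagrange.basis Finset.univ v l).eval (v j - 1) with hM
  set I : Matrix (Fin N) (Fin N) F := Matrix.diagonal fun i => ((i : ℕ) : F)
  have hdet : IsUnit A.det := by
    rw [isUnit_iff_ne_zero, det_descPochhammer_eval]
    exact Matrix.det_vandermonde_ne_zero_iff.mpr hv
  have hAM : A * M = A * Matrix.diagonal v - I * A := by
    ext i j
    have h := congrArg (eval (v j - 1)) (eq_sum_lagrangeBasis hv (degree_descPochhammer_lt F i))
    simp only [eval_finsetSum, eval_mul, eval_C] at h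
    rw [Matrix.sub_apply, Matrix.mul_diagonal, Matrix.diagonal_mul, Matrix.mul_apply]
    simp only [hA, hM, Matrix.of_apply, mul_left_comm _ (v j)]
    rw [← Finset.mul_sum, ← h, descPochhammer_eval_shift]
    ring
  have hM' : M = Matrix.diagonal v - A⁻¹ * (I * A) := by
    rw [← Matrix.nonsing_inv_mul_cancel_left A M hdet, hAM, mul_sub,
      Matrix.nonsing_inv_mul_cancel_left A _ hdet]
  calc ∑ j, v j * (Lagrange.basis Finset.univ v j).eval (v j - 1) = M.trace := rfl
    _ = ∑ j, v j - ∑ i : Fin N, ((i : ℕ) : F) := by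
      rw [hM', Matrix.trace_sub, Matrix.trace_mul_comm A⁻¹,
        Matrix.mul_nonsing_inv_cancel_right A _ hdet, Matrix.trace_diagonal, Matrix.trace_diagonal]

end

/-! ### Hermite polynomials with reversed powers -/

/-- The coefficient of `X ^ (n - 2 * s)` in the Hermite polynomial `He_n`. It vanishes for
`n < 2 * s`. -/
def hermiteCoeff (n s : ℕ) : ℚ :=
  n.descFactorial (2 * s) * (-1 / 2) ^ s / s.factorial

theorem hermiteCoeff_of_lt {n s : ℕ} (h : n < 2 * s) : hermiteCoeff n s = 0 := by
  simp [hermiteCoeff, Nat.descFactorial_of_lt h]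

theorem cast_descFactorial_succ (n k : ℕ) :
    (n.descFactorial (k + 1) : ℚ) = (n - k) * n.descFactorial k := by
  simp only [← descPochhammer_eval_eq_descFactorial ℚ, descPochhammer_succ_eval, mul_comm]

theorem coeff_hermite_two_mul_add (m s : ℕ) :
    ((hermite (2 * s + m)).coeff m : ℚ) = hermiteCoeff (2 * s + m) s := by
  have hfact : (2 * s).factorial = 2 ^ s * s.factorial * (2 * s - 1).doubleFactorial := by
    rcases s with _ | s
    · rfl
    · rw [← Nat.doubleFactorial_two_mul]
      exact Nat.factorial_eq_mul_doubleFactorial (2 * s + 1)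
  rw [coeff_hermite_explicit, hermiteCoeff, Nat.descFactorial_eq_factorial_mul_choose,
    Nat.choose_symm_add, hfact]
  have : (s.factorial : ℚ) ≠ 0 := by positivity
  push_cast
  rw [div_pow]
  field_simp

theorem map_hermite_eq_sum (n : ℕ) : (hermite n).map (Int.castRingHom ℚ) =
    ∑ s ∈ Finset.range (n + 1), C (hermiteCoeff n s) * X ^ (n - 2 * s) := by
  ext m
  simp only [coeff_map, finsetSum_coeff, coeff_C_mul, coeff_X_pow, eq_intCast]
  by_cases h : ∃ s, n = 2 * s + m
  · obtain ⟨s, rfl⟩ := h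
    rw [Finset.sum_eq_single_of_mem s (Finset.mem_range.mpr (by omega)),
      if_pos (by omega), mul_one, coeff_hermite_two_mul_add]
    intro b _ hb
    by_cases hbn : 2 * s + m < 2 * b
    · rw [hermiteCoeff_of_lt hbn, zero_mul]
    · rw [if_neg (by omega), mul_zero]
  · have hcoeff : (hermite n).coeff m = 0 := by
      by_cases hmn : n < m
      · exact coeff_hermite_of_lt hmn
      · refine coeff_hermite_of_odd_add (Nat.not_even_iff_odd.mp ?_)
        rintro ⟨r, hr⟩
        exact h ⟨r - m, by omega⟩
    rw [hcoeff, Int.cast_zero, Finset.sum_eq_zero]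
    intro b _
    by_cases hbn : n < 2 * b
    · rw [hermiteCoeff_of_lt hbn, zero_mul]
    · rw [if_neg fun hm => h ⟨b, by omega⟩, mul_zero]

/-- The linear map `p ↦ ∑ s, c_s * p(n - 2 * s) * X ^ s`, with `c_s` the coefficient of
`X ^ (n - 2 * s)` in `He_n`. For `p = 1` this is `He_n` with its powers reversed, and for `p` the
`i`-th falling factorial it is the `i`-th derivative of `He_n`. -/
noncomputable def hermiteTransform (n : ℕ) : ℚ[X] →ₗ[ℚ] ℚ[X] :=
  ∑ s ∈ Finset.range (n + 1), monomial s ∘ₗ (hermiteCoeff n s • leval ((n : ℚ) - 2 * s))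

theorem hermiteTransform_apply (n : ℕ) (p : ℚ[X]) : hermiteTransform n p =
    ∑ s ∈ Finset.range (n + 1), monomial s (hermiteCoeff n s * p.eval ((n : ℚ) - 2 * s)) := by
  simp [hermiteTransform, LinearMap.sum_apply]

theorem coeff_hermiteTransform (n : ℕ) (p : ℚ[X]) (s : ℕ) :
    (hermiteTransform n p).coeff s = hermiteCoeff n s * p.eval ((n : ℚ) - 2 * s) := by
  rw [hermiteTransform_apply, finsetSum_coeff]
  simp only [coeff_monomial, Finset.sum_ite_eq', Finset.mem_range]
  refine ite_eq_left_iff.mpr fun h => ?_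
  rw [hermiteCoeff_of_lt (by omega), zero_mul]

theorem coeff_zero_hermiteTransform (n : ℕ) (p : ℚ[X]) :
    (hermiteTransform n p).coeff 0 = p.eval (n : ℚ) := by
  simp [coeff_hermiteTransform, hermiteCoeff]

theorem hermiteTransform_zero (p : ℚ[X]) : hermiteTransform 0 p = C (p.eval 0) := by
  simp [hermiteTransform_apply, hermiteCoeff]

theorem derivative_hermiteTransform (n : ℕ) (p : ℚ[X]) :
    derivative (hermiteTransform n p) =
      C (-1 / 2 * (n.descFactorial 2 : ℚ)) * hermiteTransform (n - 2) p := by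
  ext s
  rw [coeff_derivative, coeff_C_mul, coeff_hermiteTransform, coeff_hermiteTransform]
  rcases lt_or_ge n 2 with hn | hn
  · rw [hermiteCoeff_of_lt (by omega), Nat.descFactorial_of_lt hn]
    simp
  · have hcoeff : hermiteCoeff n (s + 1) * (s + 1) =
        -1 / 2 * n.descFactorial 2 * hermiteCoeff (n - 2) s := by
      have h := Nat.descFactorial_mul_descFactorial (n := n) (k := 2) (m := 2 * (s + 1)) (by omega)
      rw [show 2 * (s + 1) - 2 = 2 * s by omega] at h
      rw [hermiteCoeff, hermiteCoeff, ← h, Nat.factorial_succ]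
      have : (s.factorial : ℚ) ≠ 0 := by positivity
      push_cast
      field_simp
      ring
    have harg : (n : ℚ) - 2 * (s + 1 : ℕ) = ((n - 2 : ℕ) : ℚ) - 2 * s := by
      push_cast [hn]
      ring
    rw [harg, mul_right_comm, hcoeff, mul_assoc]

theorem hermiteTransform_succ_X_mul_comp (n : ℕ) (p : ℚ[X]) :
    hermiteTransform (n + 1) (X * p.comp (X - 1)) = C (n + 1 : ℚ) * hermiteTransform n p := by
  ext s
  have h : (((n + 1).descFactorial (2 * s) : ℕ) : ℚ) * ((n + 1 : ℕ) - 2 * s) =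
      (n + 1) * n.descFactorial (2 * s) := by
    have h := cast_descFactorial_succ (n + 1) (2 * s)
    rw [Nat.succ_descFactorial_succ] at h
    push_cast at h ⊢
    rw [h, mul_comm]
  have harg : ((n + 1 : ℕ) : ℚ) - 2 * s - 1 = n - 2 * s := by push_cast; ring
  rw [coeff_C_mul, coeff_hermiteTransform, coeff_hermiteTransform]
  simp only [hermiteCoeff, eval_mul, eval_X, eval_comp, eval_sub, eval_one, harg]
  linear_combination (-1 / 2) ^ s / (s.factorial : ℚ) * p.eval (n - 2 * s : ℚ) * h

theorem pow_mul_eval_iterate_derivative_X_pow (x : ℚ) (i r : ℕ) :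
    x ^ i * (derivative^[i] (X ^ r : ℚ[X])).eval x = (descPochhammer ℚ i).eval (r : ℚ) * x ^ r := by
  rw [iterate_derivative_X_pow_eq_C_mul, descPochhammer_eval_eq_descFactorial, eval_mul, eval_C,
    eval_X_pow]
  rcases lt_or_ge r i with h | h
  · simp [Nat.descFactorial_of_lt h]
  · rw [mul_left_comm, ← pow_add, Nat.add_sub_cancel' h]

theorem pow_mul_eval_iterate_derivative_hermite {x : ℚ} (hx : x ≠ 0) (n i : ℕ) :
    x ^ i * (derivative^[i] ((hermite n).map (Int.castRingHom ℚ))).eval x =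
      x ^ n * (hermiteTransform n (descPochhammer ℚ i)).eval (x⁻¹ ^ 2) := by
  rw [map_hermite_eq_sum, iterate_derivative_sum, hermiteTransform_apply, eval_finsetSum,
    eval_finsetSum, Finset.mul_sum, Finset.mul_sum]
  refine Finset.sum_congr rfl fun s _ => ?_
  rw [iterate_derivative_C_mul, eval_mul, eval_C, mul_left_comm,
    pow_mul_eval_iterate_derivative_X_pow, eval_monomial]
  rcases lt_or_ge n (2 * s) with h | h
  · simp [hermiteCoeff_of_lt h]
  · obtain ⟨r, rfl⟩ := Nat.exists_eq_add_of_le h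
    rw [Nat.add_sub_cancel_left, pow_add, ← pow_mul, inv_pow]
    push_cast
    field_simp
    simp

/-! ### Normalized Wronskians and border strips -/

section

variable {ι κ : Type*} [Fintype ι] [DecidableEq ι] [Fintype κ] [DecidableEq κ]

/-- The Lagrange basis polynomial of the nodes `n` that is `1` at `n l` and `0` at the others. -/
noncomputable def nodeBasis (n : ι → ℕ) (l : ι) : ℚ[X] :=
  Lagrange.basis Finset.univ (fun j => (n j : ℚ)) l

theorem eval_nodeBasis (n : ι → ℕ) (l : ι) (x : ℚ) :
    (nodeBasis n l).eval x = ∏ i, if i = l then 1 else (x - n i) / (n l - n i) := by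
  rw [nodeBasis, Lagrange.basis, eval_prod, ← Finset.mul_prod_erase _ _ (Finset.mem_univ l),
    if_pos rfl, one_mul]
  refine Finset.prod_congr rfl fun i hi => ?_
  rw [if_neg (Finset.ne_of_mem_erase hi)]
  simp [Lagrange.basisDivisor, div_eq_inv_mul]

theorem eval_nodeBasis_of_ne (n : ι → ℕ) {i l : ι} (h : i ≠ l) :
    (nodeBasis n l).eval (n i : ℚ) = 0 :=
  Lagrange.eval_basis_of_ne (v := fun j => (n j : ℚ)) h.symm (Finset.mem_univ i)

theorem eval_nodeBasis_self {n : ι → ℕ} (hn : Function.Injective n) (l : ι) :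
    (nodeBasis n l).eval (n l : ℚ) = 1 :=
  Lagrange.eval_basis_self (v := fun j => (n j : ℚ)) (Nat.cast_injective.comp hn).injOn
    (Finset.mem_univ l)

theorem natDegree_nodeBasis_lt {n : ι → ℕ} (hn : Function.Injective n) (l : ι) :
    (nodeBasis n l).natDegree < Fintype.card ι := by
  have hinj : Set.InjOn (fun j => (n j : ℚ)) (Finset.univ : Finset ι) :=
    (Nat.cast_injective.comp hn).injOn
  rw [nodeBasis, Lagrange.natDegree_basis hinj (Finset.mem_univ l)]
  exact Nat.sub_lt (Fintype.card_pos_iff.mpr ⟨l⟩) one_pos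

theorem nodeBasis_comp_equiv (e : κ ≃ ι) (n : ι → ℕ) (j : κ) :
    nodeBasis (n ∘ e) j = nodeBasis n (e j) := by
  refine funext fun x => ?_
  rw [eval_nodeBasis, eval_nodeBasis, ← e.prod_comp]
  simp only [Function.comp_apply, e.apply_eq_iff_eq]

theorem eval_nodeBasis_sumElim_inl (α : ι → ℕ) (β : κ → ℕ) (j : ι) (x : ℚ) :
    (nodeBasis (Sum.elim α β) (Sum.inl j)).eval x =
      (nodeBasis α j).eval x * ∏ i, (x - β i) / (α j - β i) := by
  simp [eval_nodeBasis, Fintype.prod_sum_type]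

theorem eval_nodeBasis_sumElim_inr (α : ι → ℕ) (β : κ → ℕ) (j : κ) (x : ℚ) :
    (nodeBasis (Sum.elim α β) (Sum.inr j)).eval x =
      (∏ i, (x - α i) / (β j - α i)) * (nodeBasis β j).eval x := by
  simp [eval_nodeBasis, Fintype.prod_sum_type]

theorem eval_nodeBasis_affine {a : ℕ} (ha : a ≠ 0) (b : ℕ) (n : ι → ℕ) (j : ι) (x : ℚ) :
    (nodeBasis (fun i => a * n i + b) j).eval (a * x + b) = (nodeBasis n j).eval x := by
  have ha' : (a : ℚ) ≠ 0 := Nat.cast_ne_zero.mpr ha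
  simp only [eval_nodeBasis]
  refine Finset.prod_congr rfl fun i _ => ?_
  push_cast
  rw [add_sub_add_right_eq_sub, add_sub_add_right_eq_sub, ← mul_sub, ← mul_sub,
    mul_div_mul_left _ _ ha']

theorem det_eval_nodeBasis_update {n : ι → ℕ} (hn : Function.Injective n) (j : ι) (y : ℕ) :
    (Matrix.of fun l m => (nodeBasis n l).eval (Function.update n j y m : ℚ)).det =
      (nodeBasis n j).eval (y : ℚ) := by
  have hM : (Matrix.of fun l m => (nodeBasis n l).eval (Function.update n j y m : ℚ)) =
      (1 : Matrix ι ι ℚ).updateCol j fun l => (nodeBasis n l).eval (y : ℚ) := by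
    ext l m
    rcases eq_or_ne m j with rfl | hm
    · simp
    · rw [Matrix.updateCol_ne hm, Matrix.of_apply, Function.update_of_ne hm, Matrix.one_apply]
      split_ifs with hlm
      · rw [hlm, eval_nodeBasis_self hn]
      · exact eval_nodeBasis_of_ne n (Ne.symm hlm)
  rw [hM, ← Matrix.cramer_apply, Matrix.cramer_one]
  rfl

/-- The Wronskian of the Hermite polynomials `He_{n_j}`, divided by the Vandermonde determinant of
`n` and with its powers reversed. Expanding in the Lagrange basis of the nodes instead of the
falling factorials absorbs the Vandermonde determinant, and no ordering of the index type is
needed. -/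
noncomputable def hermiteDet (n : ι → ℕ) : ℚ[X] :=
  (Matrix.of fun l j => hermiteTransform (n j) (nodeBasis n l)).det

theorem det_hermiteTransform (n : ι → ℕ) {p : ι → ℚ[X]} (hp : ∀ i, (p i).degree < Fintype.card ι) :
    (Matrix.of fun i j => hermiteTransform (n j) (p i)).det =
      C (Matrix.of fun i j => (p i).eval (n j : ℚ)).det * hermiteDet n := by
  by_cases hn : Function.Injective n
  · have hexp : ∀ i, p i = ∑ l, (p i).eval (n l : ℚ) • nodeBasis n l := fun i => by
      simp only [smul_eq_C_mul]
      exact eq_sum_lagrangeBasis (v := fun j => (n j : ℚ)) (Nat.cast_injective.comp hn) (hp i)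
    rw [hermiteDet, RingHom.map_det, ← Matrix.det_mul]
    congr 1
    ext1 i j
    rw [Matrix.of_apply, hexp i, map_sum, Matrix.mul_apply]
    exact Finset.sum_congr rfl fun l _ => by rw [map_smul, smul_eq_C_mul]; rfl
  · simp only [Function.Injective, not_forall] at hn
    obtain ⟨a, b, hab, hne⟩ := hn
    rw [Matrix.det_zero_of_column_eq hne fun i => by simp [hab],
      Matrix.det_zero_of_column_eq (M := Matrix.of fun i j => (p i).eval (n j : ℚ)) hne
        fun i => by simp [hab], C_0, zero_mul]

theorem coeff_zero_hermiteDet {n : ι → ℕ} (hn : Function.Injective n) :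
    (hermiteDet n).coeff 0 = 1 := by
  have hM : (evalRingHom (0 : ℚ)).mapMatrix
      (Matrix.of fun l j => hermiteTransform (n j) (nodeBasis n l)) = 1 := by
    ext l j
    rw [RingHom.mapMatrix_apply, Matrix.map_apply, Matrix.of_apply, coe_evalRingHom,
      ← coeff_zero_eq_eval_zero, coeff_zero_hermiteTransform, Matrix.one_apply]
    split_ifs with h
    · rw [h, eval_nodeBasis_self hn]
    · exact eval_nodeBasis_of_ne n (Ne.symm h)
  rw [hermiteDet, coeff_zero_eq_eval_zero, ← coe_evalRingHom, RingHom.map_det, hM, Matrix.det_one]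

theorem hermiteDet_comp_equiv (e : κ ≃ ι) (n : ι → ℕ) : hermiteDet (n ∘ e) = hermiteDet n := by
  rw [hermiteDet, hermiteDet, ← Matrix.det_submatrix_equiv_self e]
  simp only [nodeBasis_comp_equiv]
  rfl

theorem hermiteDet_eq_of_range_eq {f : κ → ℕ} {g : ι → ℕ} (hf : Function.Injective f)
    (hg : Function.Injective g) (h : Set.range f = Set.range g) :
    hermiteDet f = hermiteDet g := by
  obtain ⟨e, rfl⟩ := exists_equiv_comp_eq hf hg h
  exact hermiteDet_comp_equiv e g

theorem hermiteDet_append_zero {f : ι → ℕ} (hf : Function.Injective f) :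
    hermiteDet (Sum.elim (fun i => f i + 1) fun _ : Fin 1 => 0) = hermiteDet f := by
  set n : ι ⊕ Fin 1 → ℕ := Sum.elim (fun i => f i + 1) fun _ => 0
  set p : ι ⊕ Fin 1 → ℚ[X] := Sum.elim (fun i => X * (nodeBasis f i).comp (X - 1)) fun _ => 1
  set c : ℚ := ∏ j, (f j + 1 : ℚ) with hc
  have hn : Function.Injective n :=
    Function.Injective.sumElim (fun _ _ h => hf (Nat.succ_injective h))
      (Function.injective_of_subsingleton _) fun _ _ => Nat.succ_ne_zero _
  have hp : ∀ i, (p i).degree < Fintype.card (ι ⊕ Fin 1) := by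
    refine fun i => degree_le_natDegree.trans_lt (Nat.cast_lt.mpr ?_)
    rw [Fintype.card_sum, Fintype.card_fin]
    rcases i with i | _
    · have hcomp : ((nodeBasis f i).comp (X - 1)).natDegree = (nodeBasis f i).natDegree := by
        rw [natDegree_comp, ← C_1, natDegree_X_sub_C, mul_one]
      have := natDegree_nodeBasis_lt hf i
      exact natDegree_mul_le.trans_lt (by rw [natDegree_X, hcomp]; omega)
    · simp [p]
  have hblocks : (Matrix.of fun i j => hermiteTransform (n j) (p i)) = Matrix.fromBlocks
      (Matrix.of fun i j => C (f j + 1 : ℚ) * hermiteTransform (f j) (nodeBasis f i)) 0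
      (Matrix.of fun _ j => hermiteTransform (f j + 1) 1) 1 := by
    ext1 (i | i) (j | j)
    · exact hermiteTransform_succ_X_mul_comp _ _
    · simp [n, p, hermiteTransform_zero]
    · simp [n, p]
    · simp [n, p, hermiteTransform_zero, Subsingleton.elim i j]
  have hdet : (Matrix.of fun i j => hermiteTransform (n j) (p i)).det = C c * hermiteDet f := by
    rw [hblocks, Matrix.det_fromBlocks_zero₁₂, Matrix.det_one, mul_one, hc, map_prod]
    exact Matrix.det_mul_row (fun j => C (f j + 1 : ℚ)) _
  have hscalar := hdet.symm.trans (det_hermiteTransform n hp)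
  have hcoeff := congrArg (coeff · 0) hscalar
  simp only [coeff_C_mul, coeff_zero_hermiteDet hf, coeff_zero_hermiteDet hn, mul_one] at hcoeff
  rw [← hcoeff] at hscalar
  refine (mul_left_cancel₀ (C_ne_zero.mpr ?_) hscalar).symm
  exact Finset.prod_ne_zero_iff.mpr fun j _ => by positivity

/-- The ratio `n_j (n_j - 1) ⋯ (n_j - r + 1) * Δ(n - r e_j) / Δ(n)` of Vandermonde products, the
weight of removing a border strip of size `r` through the `j`-th entry of a degree vector `n`. -/
noncomputable def stripWeight (r : ℕ) (n : ι → ℕ) (j : ι) : ℚ :=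
  (n j).descFactorial r * (nodeBasis n j).eval ((n j : ℚ) - r)

theorem stripWeight_comp_equiv (r : ℕ) (e : κ ≃ ι) (n : ι → ℕ) (j : κ) :
    stripWeight r (n ∘ e) j = stripWeight r n (e j) := by
  simp only [stripWeight, nodeBasis_comp_equiv, Function.comp_apply]

theorem le_of_stripWeight_ne_zero {r : ℕ} {n : ι → ℕ} {j : ι} (h : stripWeight r n j ≠ 0) :
    r ≤ n j := by
  contrapose! h
  simp [stripWeight, Nat.descFactorial_of_lt h]

theorem stripWeight_eq_zero_of_eq_sub {r : ℕ} {n : ι → ℕ} {i j : ι} (hij : i ≠ j)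
    (h : n i = (n j : ℚ) - r) : stripWeight r n j = 0 := by
  rw [stripWeight, ← h, eval_nodeBasis_of_ne n hij, mul_zero]

theorem injective_update_of_stripWeight_ne_zero {r : ℕ} {n : ι → ℕ} (hn : Function.Injective n)
    {j : ι} (h : stripWeight r n j ≠ 0) : Function.Injective (Function.update n j (n j - r)) := by
  have hle := le_of_stripWeight_ne_zero h
  have hne : ∀ i, i ≠ j → n i ≠ n j - r := fun i hij hi =>
    h (stripWeight_eq_zero_of_eq_sub hij (by rw [hi]; push_cast [hle]; rfl))
  exact injective_update hn hne

theorem derivative_hermiteDet {n : ι → ℕ} (hn : Function.Injective n) :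
    derivative (hermiteDet n) = ∑ j, C (-1 / 2 * stripWeight 2 n j) *
      hermiteDet (Function.update n j (n j - 2)) := by
  rw [hermiteDet, derivative_det]
  refine Finset.sum_congr rfl fun j _ => ?_
  set n' := Function.update n j (n j - 2) with hn'
  set c : ℚ := -1 / 2 * (n j).descFactorial 2
  have hcol : (Matrix.of fun l m => hermiteTransform (n m) (nodeBasis n l)).updateCol j
      (fun l => derivative (hermiteTransform (n j) (nodeBasis n l))) =
      (Matrix.of fun l m => hermiteTransform (n' m) (nodeBasis n l)).updateCol j
        (C c • fun l => hermiteTransform (n' j) (nodeBasis n l)) := by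
    ext1 l m
    rcases eq_or_ne m j with rfl | hm
    · simp [hn', c, derivative_hermiteTransform]
    · simp [hn', hm]
  have hdeg : ∀ l, (nodeBasis n l).degree < Fintype.card ι := fun l =>
    degree_le_natDegree.trans_lt (Nat.cast_lt.mpr (natDegree_nodeBasis_lt hn l))
  have hweight : c * (nodeBasis n j).eval ((n j - 2 : ℕ) : ℚ) = -1 / 2 * stripWeight 2 n j := by
    rw [mul_assoc, stripWeight]
    rcases lt_or_ge (n j) 2 with h | h
    · rw [Nat.descFactorial_of_lt h, Nat.cast_zero, zero_mul, zero_mul]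
    · rw [Nat.cast_sub h]
  calc _ = C c * (Matrix.of fun l m => hermiteTransform (n' m) (nodeBasis n l)).det := by
        simp only [Matrix.of_apply]
        rw [hcol, Matrix.det_updateCol_smul]
        congr 2
        exact Matrix.updateCol_eq_self _ _
    _ = _ := by
      rw [det_hermiteTransform n' hdeg, hn', det_eval_nodeBasis_update hn, ← mul_assoc, ← C_mul,
        hweight]

theorem succ_mul_coeff_succ_hermiteDet {n : ι → ℕ} (hn : Function.Injective n) (s : ℕ) :
    (s + 1) * (hermiteDet n).coeff (s + 1) =
      -1 / 2 * ∑ j, stripWeight 2 n j * (hermiteDet (Function.update n j (n j - 2))).coeff s := by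
  rw [mul_comm, ← coeff_derivative, derivative_hermiteDet hn, finsetSum_coeff, Finset.mul_sum]
  exact Finset.sum_congr rfl fun j _ => by rw [coeff_C_mul, mul_assoc]

theorem sum_stripWeight_one {n : ι → ℕ} (hn : Function.Injective n) :
    ∑ j, stripWeight 1 n j = ∑ j, (n j : ℚ) - (Fintype.card ι).choose 2 := by
  have hfin : ∀ {N : ℕ} {v : Fin N → ℕ}, Function.Injective v →
      ∑ j, stripWeight 1 v j = ∑ j, (v j : ℚ) - N.choose 2 := fun {N v} hv => by
    have h := sum_mul_eval_lagrangeBasis (v := fun j => (v j : ℚ)) (Nat.cast_injective.comp hv)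
    rw [← sum_fin_val]
    simpa [stripWeight, nodeBasis] using h
  set e := (Fintype.equivFin ι).symm
  have h := hfin (hn.comp e.injective)
  simp only [stripWeight_comp_equiv] at h
  rwa [e.sum_comp, Function.comp_def, e.sum_comp fun i => (n i : ℚ)] at h

end

/-! ### Partitions and degree vectors -/

theorem coeff_eq_coeff_of_pow_mul_eval {F : Type*} [Field F] [Infinite F] {p q : F[X]} {A B : ℕ}
    (h : ∀ x : F, x ≠ 0 → x ^ B * p.eval x = x ^ A * q.eval (x⁻¹ ^ 2)) {m s : ℕ}
    (hA : A = B + m + 2 * s) : p.coeff m = q.coeff s := by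
  set N := (expand F 2 q).natDegree + 2 * s
  have hpoly : X ^ (B + N) * p = X ^ A * reflect N (expand F 2 q) := by
    refine eq_of_infinite_eval_eq _ _ (Set.Infinite.mono ?_ (Set.finite_singleton 0).infinite_compl)
    intro x hx
    have hx : x ≠ 0 := hx
    have := invertibleOfNonzero (inv_ne_zero hx)
    have hr := eval₂_reflect_mul_pow (RingHom.id F) x⁻¹ N (expand F 2 q) (by omega)
    simp only [invOf_eq_inv, inv_inv, eval₂_id, expand_eval] at hr
    change eval x _ = eval x _
    simp only [eval_mul, eval_pow, eval_X]
    rw [pow_add, mul_right_comm, h x hx, ← hr, inv_pow]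
    field_simp
  have hcoeff := congrArg (coeff · (m + (B + N))) hpoly
  simp only [coeff_X_pow_mul] at hcoeff
  rw [hcoeff, show m + (B + N) = N - 2 * s + A by omega, coeff_X_pow_mul, coeff_reflect,
    revAt_le (by omega), Nat.sub_sub_self (by omega), mul_comm, coeff_expand_mul two_pos]

theorem pow_mul_eval_wronskian {N : ℕ} (n : Fin N → ℕ) {x : ℚ} (hx : x ≠ 0) :
    x ^ N.choose 2 * (Matrix.of fun i j : Fin N =>
        derivative^[i] ((hermite (n j)).map (Int.castRingHom ℚ))).det.eval x =
      x ^ (∑ j, n j) * ((Matrix.vandermonde fun j => (n j : ℚ)).det *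
        (hermiteDet n).eval (x⁻¹ ^ 2)) := by
  have hdet := det_hermiteTransform n (p := fun i => descPochhammer ℚ i)
    (degree_descPochhammer_lt ℚ)
  rw [det_descPochhammer_eval fun j => (n j : ℚ)] at hdet
  rw [← sum_fin_val, ← eval_C (a := (Matrix.vandermonde fun j => (n j : ℚ)).det) (x := x⁻¹ ^ 2),
    ← eval_mul, ← hdet, ← coe_evalRingHom, ← coe_evalRingHom, RingHom.map_det, RingHom.map_det,
    ← Finset.prod_pow_eq_pow_sum, ← Finset.prod_pow_eq_pow_sum, ← Matrix.det_mul_column,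
    ← Matrix.det_mul_row]
  congr 1
  ext i j
  exact pow_mul_eval_iterate_derivative_hermite hx (n j) i

theorem vanderQ_eq_det_vandermonde (l : List ℕ) :
    vanderQ l = (Matrix.vandermonde fun j => (degVec l j : ℚ)).det := by
  rw [vanderQ, Matrix.det_vandermonde]
  refine Finset.prod_congr rfl fun i _ => ?_
  rw [← Finset.prod_filter]
  exact Finset.prod_congr (by ext j; simp) fun _ _ => rfl

theorem sum_degVec (l : List ℕ) : ∑ i, degVec l i = l.sum + l.length.choose 2 := by
  have hrev : ∑ i : Fin l.length, (l.length - 1 - (i : ℕ)) = ∑ i : Fin l.length, (i : ℕ) := by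
    rw [← Equiv.sum_comp Fin.revPerm]
    exact Finset.sum_congr rfl fun i _ => by rw [Fin.revPerm_apply, Fin.val_rev]; omega
  simp only [degVec, Finset.sum_add_distrib, hrev, sum_fin_val]
  rw [← List.sum_ofFn, List.ofFn_get]

theorem degVec_injective {l : List ℕ} (hl : l.Pairwise (· ≥ ·)) :
    Function.Injective (degVec l) := by
  refine StrictAnti.injective fun i j hij => ?_
  have hle : l.get j ≤ l.get i := List.pairwise_iff_get.mp hl i j hij
  have : (i : ℕ) < j := hij
  have := j.isLt
  simp only [degVec]
  omega

theorem coeff_HeW {l : List ℕ} (hl : l.Pairwise (· ≥ ·)) {m s : ℕ} (h : l.sum = m + 2 * s) :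
    (HeW l).coeff m = (hermiteDet (degVec l)).coeff s := by
  have hv : vanderQ l ≠ 0 := by
    rw [vanderQ_eq_det_vandermonde]
    exact Matrix.det_vandermonde_ne_zero_iff.mpr (Nat.cast_injective.comp (degVec_injective hl))
  refine coeff_eq_coeff_of_pow_mul_eval (A := ∑ j, degVec l j) (B := l.length.choose 2)
    (fun x hx => ?_) (by rw [sum_degVec]; omega)
  rw [HeW, eval_mul, eval_C, mul_left_comm, pow_mul_eval_wronskian (degVec l) hx,
    ← vanderQ_eq_det_vandermonde, ← mul_assoc, ← mul_assoc, mul_right_comm _ _ (vanderQ l)]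
  field_simp

theorem hermiteDet_degVec_append_zero {l : List ℕ} (hl : l.Pairwise (· ≥ ·)) :
    hermiteDet (degVec (l ++ [0])) = hermiteDet (degVec l) := by
  have hlen : l.length + 1 = (l ++ [0]).length := by simp
  rw [← hermiteDet_append_zero (degVec_injective hl),
    ← hermiteDet_comp_equiv (finSumFinEquiv.trans (finCongr hlen))]
  congr 1
  ext (i | i)
  · have := i.isLt
    simp [degVec]
    omega
  · simp [degVec]

theorem hermiteDet_degVec_filter_pos {l : List ℕ} (hl : l.Pairwise (· ≥ ·)) :
    hermiteDet (degVec (l.filter fun x => decide (0 < x))) = hermiteDet (degVec l) := by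
  induction l using List.reverseRecOn with
  | nil => rfl
  | append_singleton l a ih =>
    have hl' := List.pairwise_append.mp hl
    rcases Nat.eq_zero_or_pos a with rfl | ha
    · have hfilter : (l ++ [0]).filter (fun x => decide (0 < x)) =
          l.filter fun x => decide (0 < x) := by
        simp
      rw [hermiteDet_degVec_append_zero hl'.1, ← ih hl'.1, hfilter]
    · rw [List.filter_eq_self.mpr]
      intro x hx
      rcases List.mem_append.mp hx with hx | hx
      · exact decide_eq_true (ha.trans_le (hl'.2.2 x hx a (List.mem_singleton_self a)))
      · exact decide_eq_true (List.mem_singleton.mp hx ▸ ha)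

section

variable {ι κ : Type*}

/-- The weakly decreasing list, possibly ending in zeros, whose degree vector lists the entries of
the strictly increasing list `s` in decreasing order. -/
def ofDegrees (s : List ℕ) : List ℕ :=
  ((List.range s.length).map fun t => s.getD t 0 - t).reverse

theorem getElem_add_le_of_pairwise_lt {s : List ℕ} (hs : s.Pairwise (· < ·)) {t r : ℕ}
    (h : t + r < s.length) : s[t] + r ≤ s[t + r] := by
  induction r with
  | zero => rfl
  | succ r ih =>
    have hlt : s[t + r] < s[t + (r + 1)] :=
      List.pairwise_iff_getElem.mp hs _ _ _ h (Nat.lt_succ_self _)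
    have := ih (by omega)
    omega

theorem length_ofDegrees (s : List ℕ) : (ofDegrees s).length = s.length := by
  simp [ofDegrees]

theorem getElem_ofDegrees {s : List ℕ} {i : ℕ} (h : i < s.length) :
    (ofDegrees s)[i]'(by rwa [length_ofDegrees]) =
      s[s.length - 1 - i] - (s.length - 1 - i) := by
  have : s.length - 1 - i < s.length := by omega
  simp [ofDegrees, this]

theorem pairwise_ofDegrees {s : List ℕ} (hs : s.Pairwise (· < ·)) :
    (ofDegrees s).Pairwise (· ≥ ·) := by
  refine List.pairwise_iff_getElem.mpr fun i j hi hj hij => ?_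
  rw [length_ofDegrees] at hi hj
  rw [getElem_ofDegrees hi, getElem_ofDegrees hj]
  have := getElem_add_le_of_pairwise_lt hs (t := s.length - 1 - j) (r := j - i) (by omega)
  simp only [show s.length - 1 - j + (j - i) = s.length - 1 - i by omega] at this
  omega

theorem range_degVec_ofDegrees {s : List ℕ} (hs : s.Pairwise (· < ·)) :
    Set.range (degVec (ofDegrees s)) = {x | x ∈ s} := by
  set e := (finCongr (length_ofDegrees s)).trans Fin.revPerm
  have hdeg : degVec (ofDegrees s) = s.get ∘ e := by
    ext i
    have hi := i.isLt.trans_eq (length_ofDegrees s)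
    have hle := getElem_add_le_of_pairwise_lt hs (t := 0) (r := s.length - 1 - i) (by omega)
    simp only [zero_add] at hle
    simp only [degVec, List.get_eq_getElem, getElem_ofDegrees hi, length_ofDegrees,
      Function.comp_apply, e, Equiv.trans_apply, finCongr_apply, Fin.revPerm_apply, Fin.val_rev,
      Fin.val_cast, show s.length - (i + 1) = s.length - 1 - i by omega]
    omega
  rw [hdeg, e.surjective.range_comp, Set.range_list_get]

theorem sum_of_range_eq [Fintype ι] {l : List ℕ} (hl : l.Pairwise (· ≥ ·)) {n : ι → ℕ}
    (hn : Function.Injective n) (h : Set.range n = Set.range (degVec l)) :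
    ∑ i, n i = l.sum + (Fintype.card ι).choose 2 := by
  obtain ⟨e, rfl⟩ := exists_equiv_comp_eq hn (degVec_injective hl) h
  rw [Fintype.card_congr e, Fintype.card_fin, ← sum_degVec, ← e.sum_comp]
  rfl

theorem choose_two_card_le_sum [Fintype ι] {n : ι → ℕ} (hn : Function.Injective n) :
    (Fintype.card ι).choose 2 ≤ ∑ i, n i := by
  set s := (Finset.univ.image n).sort (· ≤ ·) with hs
  have hlt : s.Pairwise (· < ·) := (Finset.sortedLT_sort _).pairwise
  rw [sum_of_range_eq (pairwise_ofDegrees hlt) hn]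
  · exact Nat.le_add_left _ _
  · rw [range_degVec_ofDegrees hlt]
    ext x
    simp [hs]

theorem coeff_HeW_ofDegrees_filter_pos [Fintype ι] [DecidableEq ι] {s : List ℕ}
    (hs : s.Pairwise (· < ·)) {n : ι → ℕ} (hn : Function.Injective n)
    (h : Set.range n = {x | x ∈ s}) {m t : ℕ}
    (hsum : ∑ i, n i = (Fintype.card ι).choose 2 + m + 2 * t) :
    (HeW ((ofDegrees s).filter fun x => decide (0 < x))).coeff m = (hermiteDet n).coeff t := by
  have hl := pairwise_ofDegrees hs
  rw [← range_degVec_ofDegrees hs] at h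
  have hfilter : ((ofDegrees s).filter fun x => decide (0 < x)).sum = (ofDegrees s).sum := by
    induction ofDegrees s with
    | nil => rfl
    | cons x l ih => rcases x.eq_zero_or_pos with rfl | hx <;> simp [*]
  rw [sum_of_range_eq hl hn h] at hsum
  rw [coeff_HeW (hl.filter _) (by omega : _ = m + 2 * t), hermiteDet_degVec_filter_pos hl,
    hermiteDet_eq_of_range_eq hn (degVec_injective hl) h]

/-- A degree vector whose 2-quotient has degree vectors `α` and `β`: even entries `2 α` and odd
entries `2 β + 1`, the latter pushed up by the first `M` odd numbers. Increasing `M` enlarges the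
2-core and leaves the 2-quotient unchanged. -/
def quotientNodes (α : ι → ℕ) (β : κ → ℕ) (M : ℕ) : (ι ⊕ κ) ⊕ Fin M → ℕ :=
  Sum.elim (Sum.elim (fun i => 2 * α i) fun j => 2 * (β j + M) + 1) fun t => 2 * t + 1

theorem quotientNodes_injective {α : ι → ℕ} {β : κ → ℕ} (hα : Function.Injective α)
    (hβ : Function.Injective β) (M : ℕ) : Function.Injective (quotientNodes α β M) := by
  refine Function.Injective.sumElim (Function.Injective.sumElim (fun i j h => hα (by omega))
    (fun i j h => hβ (by omega)) fun i j => by omega) (fun t u h => Fin.ext (by omega)) ?_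
  rintro (i | j) t
  · simp only [Sum.elim_inl]
    omega
  · have := t.isLt
    simp only [Sum.elim_inr]
    omega

theorem sum_quotientNodes [Fintype ι] [Fintype κ] (α : ι → ℕ) (β : κ → ℕ) (M : ℕ) :
    ∑ i, quotientNodes α β M i =
      2 * ∑ i, α i + 2 * ∑ j, β j + Fintype.card κ * (2 * M + 1) + M ^ 2 := by
  have hodd : ∑ t : Fin M, (2 * (t : ℕ) + 1) = M ^ 2 := by
    simp only [Finset.sum_add_distrib, ← Finset.mul_sum, sum_fin_val, Fin.sum_const, smul_eq_mul]
    qify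
    rw [Nat.cast_choose_two]
    ring
  simp only [quotientNodes, Fintype.sum_sum_type, Sum.elim_inl, Sum.elim_inr, hodd, mul_add,
    Finset.sum_add_distrib, Finset.sum_const, Finset.card_univ, smul_eq_mul, ← Finset.mul_sum]
  ring

/-- The degree vector of `μ` padded with `ℓ(ν)` zero parts; its entries are half the even elements
of the set defining `Phi μ ν k`. -/
def paddedDegVec (μ ν : List ℕ) : Fin μ.length ⊕ Fin ν.length → ℕ :=
  Sum.elim (fun i => degVec μ i + ν.length) fun t => t

theorem paddedDegVec_injective {μ : List ℕ} (hμ : μ.Pairwise (· ≥ ·)) (ν : List ℕ) :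
    Function.Injective (paddedDegVec μ ν) :=
  Function.Injective.sumElim (fun i j h => degVec_injective hμ (by omega))
    Fin.val_injective fun i t => by omega

theorem sum_paddedDegVec (μ ν : List ℕ) :
    ∑ i, paddedDegVec μ ν i = μ.sum + (μ.length + ν.length).choose 2 := by
  simp only [paddedDegVec, Fintype.sum_sum_type, Sum.elim_inl, Sum.elim_inr,
    Finset.sum_add_distrib, sum_degVec, sum_fin_val, Finset.sum_const, Finset.card_univ,
    Fintype.card_fin, smul_eq_mul]
  qify
  simp only [Nat.cast_choose_two]
  push_cast
  ring

theorem coeff_HeW_Phi {μ ν : List ℕ} (hμ : μ.Pairwise (· ≥ ·)) (hν : ν.Pairwise (· ≥ ·))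
    (k : ℕ) {t s : ℕ} (hts : t + s = μ.sum + ν.sum) :
    (HeW (Phi μ ν k)).coeff (k * (k + 1) / 2 + 2 * t) =
      (hermiteDet (quotientNodes (paddedDegVec μ ν) (degVec ν) (μ.length + k))).coeff s := by
  refine coeff_HeW_ofDegrees_filter_pos (Finset.sortedLT_sort _).pairwise
    (quotientNodes_injective (paddedDegVec_injective hμ ν) (degVec_injective hν) _) ?_ ?_
  · ext x
    simp only [quotientNodes, paddedDegVec, Set.Sum.elim_range, Set.mem_union, Set.mem_range,
      Sum.exists, Sum.elim_inl, Sum.elim_inr, Finset.mem_sort, Finset.mem_union, Finset.mem_image,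
      Finset.mem_univ, true_and, Finset.mem_range, Fin.exists_iff, exists_prop, Set.mem_ofPred_eq,
      or_assoc, ← add_assoc]
  · have hcore : k * (k + 1) / 2 = (k + 1).choose 2 := by
      rw [Nat.choose_two_right, Nat.add_sub_cancel, mul_comm]
    rw [sum_quotientNodes, sum_paddedDegVec, sum_degVec, hcore]
    simp only [Fintype.card_sum, Fintype.card_fin]
    generalize μ.sum = m, ν.sum = n at hts ⊢
    have hts' : (t : ℚ) + s = m + n := mod_cast hts
    qify
    simp only [Nat.cast_choose_two]
    push_cast
    linear_combination -2 * hts'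

end

/-! ### Asymptotics of the domino weights -/

theorem mul_prod_odd_shift {y : ℚ} {M : ℕ} (h : ∀ t < M, y ≠ 2 * t + 1) :
    (y - 1) * ∏ t : Fin M, (y - 2 - (2 * t + 1 : ℕ)) / (y - (2 * t + 1 : ℕ)) =
      y - (2 * M + 1) := by
  induction M with
  | zero => simp
  | succ M ih =>
    have hM : y - (2 * M + 1) ≠ 0 := sub_ne_zero.mpr (h M M.lt_succ_self)
    rw [Fin.prod_univ_castSucc, ← mul_assoc]
    simp only [Fin.val_castSucc, Fin.val_last]
    rw [ih fun t ht => h t (ht.trans M.lt_succ_self)]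
    push_cast
    field_simp
    ring

theorem tendsto_mul_prod_div {ι : Type*} [Fintype ι] {c : ℚ} (hc : c ≠ 0) (a₀ : ℚ) (a b : ι → ℚ) :
    Tendsto (fun M : ℕ => (a₀ + c * M) * (∏ i, (a i + c * M) / (b i + c * M)) / M) atTop (𝓝 c) := by
  have hprod := tendsto_finsetProd Finset.univ fun i _ =>
    tendsto_add_mul_div_add_mul_atTop_nhds (a i) (b i) c hc
  have hlin := tendsto_add_mul_div_add_mul_atTop_nhds a₀ 0 c one_ne_zero
  simp only [div_self hc, Finset.prod_const_one] at hprod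
  simpa only [div_one, mul_one, zero_add, one_mul, div_mul_eq_mul_div] using hlin.mul hprod

theorem coeff_add_X_add_one_pow_mul_X_sub_one_pow (m n : ℕ) :
    ((X + 1) ^ m * (X - 1) ^ n : ℚ[X]).coeff (m + n) = 1 := by
  have hm := (monic_X_add_C (1 : ℚ)).pow m
  have hn := (monic_X_sub_C (1 : ℚ)).pow n
  have := (hm.mul hn).coeff_natDegree
  rwa [hm.natDegree_mul hn, natDegree_pow, natDegree_pow, natDegree_X_add_C, natDegree_X_sub_C,
    mul_one, mul_one] at this

theorem succ_mul_coeff_X_add_one_pow_mul_X_sub_one_pow (m n : ℕ) {t s : ℕ}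
    (h : t + (s + 1) = m + n) :
    (s + 1) * ((X + 1) ^ m * (X - 1) ^ n : ℚ[X]).coeff t =
      m * ((X + 1) ^ (m - 1) * (X - 1) ^ n : ℚ[X]).coeff t -
        n * ((X + 1) ^ m * (X - 1) ^ (n - 1) : ℚ[X]).coeff t := by
  have hpow (p : ℚ[X]) (k : ℕ) : (k : ℚ[X]) * p ^ k = k * p ^ (k - 1) * p := by
    cases k <;> simp [pow_succ, mul_assoc]
  have heuler : C ((m + n : ℕ) : ℚ) * ((X + 1) ^ m * (X - 1) ^ n) -
      X * derivative ((X + 1) ^ m * (X - 1) ^ n : ℚ[X]) =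
      C (m : ℚ) * ((X + 1) ^ (m - 1) * (X - 1) ^ n) -
        C (n : ℚ) * ((X + 1) ^ m * (X - 1) ^ (n - 1)) := by
    simp only [derivative_mul, derivative_pow, derivative_add, derivative_sub, derivative_one,
      derivative_X, C_eq_natCast]
    push_cast
    linear_combination (X - 1) ^ n * hpow (X + 1) m + (X + 1) ^ m * hpow (X - 1) n
  have hcoeff := congrArg (coeff · t) heuler
  simp only [coeff_sub, coeff_C_mul] at hcoeff
  have hX : ∀ p : ℚ[X], (X * derivative p).coeff t = t * p.coeff t := fun p => by
    cases t <;> simp [coeff_derivative, mul_comm]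
  rw [← hcoeff, hX, ← h]
  push_cast
  ring

section

variable {ι κ : Type*}

section

variable [DecidableEq ι] [DecidableEq κ]

theorem update_quotientNodes_even (α : ι → ℕ) (β : κ → ℕ) (M : ℕ) (j : ι) :
    Function.update (quotientNodes α β M) (Sum.inl (Sum.inl j))
      (quotientNodes α β M (Sum.inl (Sum.inl j)) - 2) =
      quotientNodes (Function.update α j (α j - 1)) β M := by
  ext ((i | i) | t)
  · rcases eq_or_ne i j with rfl | hi <;> simp [quotientNodes, *]
    omega
  · simp [quotientNodes]
  · simp [quotientNodes]

theorem update_quotientNodes_odd (α : ι → ℕ) {β : κ → ℕ} (M : ℕ) {j : κ} (h : 1 ≤ β j) :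
    Function.update (quotientNodes α β M) (Sum.inl (Sum.inr j))
      (quotientNodes α β M (Sum.inl (Sum.inr j)) - 2) =
      quotientNodes α (Function.update β j (β j - 1)) M := by
  ext ((i | i) | t)
  · simp [quotientNodes]
  · rcases eq_or_ne i j with rfl | hi <;> simp [quotientNodes, *]
    omega
  · simp [quotientNodes]

end

variable [Fintype ι] [DecidableEq ι] [Fintype κ] [DecidableEq κ]

theorem stripWeight_quotientNodes_even (α : ι → ℕ) (β : κ → ℕ) (M : ℕ) (j : ι) :
    stripWeight 2 (quotientNodes α β M) (Sum.inl (Sum.inl j)) = stripWeight 1 α j *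
      (2 * (2 * α j - (2 * M + 1)) *
        ∏ i, (2 * α j - 2 - (2 * (β i + M) + 1) : ℚ) / (2 * α j - (2 * (β i + M) + 1))) := by
  have hodd := mul_prod_odd_shift (y := 2 * α j) (M := M) fun t _ h => by norm_cast at h; omega
  have hα : (nodeBasis (fun i => 2 * α i) j).eval ((2 * α j : ℕ) - 2 : ℚ) =
      (nodeBasis α j).eval (α j - 1 : ℚ) := by
    rw [← eval_nodeBasis_affine two_ne_zero 0 α]
    congr 1
    push_cast
    ring
  simp only [stripWeight, quotientNodes, eval_nodeBasis_sumElim_inl, Sum.elim_inl,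
    Nat.cast_descFactorial_two, Nat.descFactorial_one, Nat.cast_ofNat, Nat.cast_one, hα]
  push_cast at hodd ⊢
  linear_combination 2 * α j * (nodeBasis α j).eval (α j - 1 : ℚ) *
    (∏ i, (2 * α j - 2 - (2 * (β i + M) + 1) : ℚ) / (2 * α j - (2 * (β i + M) + 1))) * hodd

theorem stripWeight_quotientNodes_odd (α : ι → ℕ) (β : κ → ℕ) (M : ℕ) (j : κ) :
    stripWeight 2 (quotientNodes α β M) (Sum.inl (Sum.inr j)) = stripWeight 1 β j *
      (2 * (2 * (β j + M) + 1) *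
        ∏ i, (2 * (β j + M) + 1 - 2 - 2 * α i : ℚ) / (2 * (β j + M) + 1 - 2 * α i)) := by
  have hodd := mul_prod_odd_shift (y := 2 * (β j + M) + 1) (M := M) fun t ht h => by
    norm_cast at h
    omega
  have hβ : (nodeBasis (fun i => 2 * (β i + M) + 1) j).eval ((2 * (β j + M) + 1 : ℕ) - 2 : ℚ) =
      (nodeBasis β j).eval (β j - 1 : ℚ) := by
    rw [← eval_nodeBasis_affine two_ne_zero (2 * M + 1) β]
    congr 1
    · push_cast
      ring
    · simp only [mul_add, add_assoc]
  simp only [stripWeight, quotientNodes, eval_nodeBasis_sumElim_inl, eval_nodeBasis_sumElim_inr,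
    Sum.elim_inl, Sum.elim_inr, Nat.cast_descFactorial_two, Nat.descFactorial_one,
    Nat.cast_ofNat, Nat.cast_one, hβ]
  push_cast at hodd ⊢
  linear_combination (2 * (β j + M) + 1) * (nodeBasis β j).eval (β j - 1 : ℚ) *
    (∏ i, (2 * (β j + M) + 1 - 2 - 2 * α i : ℚ) / (2 * (β j + M) + 1 - 2 * α i)) * hodd

theorem stripWeight_quotientNodes_pad (α : ι → ℕ) (β : κ → ℕ) {M : ℕ} (t : Fin M) :
    stripWeight 2 (quotientNodes α β M) (Sum.inr t) = 0 := by
  obtain ⟨_ | t, ht⟩ := t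
  · simp [stripWeight, quotientNodes]
  · refine stripWeight_eq_zero_of_eq_sub (i := Sum.inr ⟨t, t.lt_succ_self.trans ht⟩) (by simp) ?_
    simp only [quotientNodes, Sum.elim_inr]
    push_cast
    ring

theorem tendsto_stripWeight_even (α : ι → ℕ) (β : κ → ℕ) (j : ι) :
    Tendsto (fun M : ℕ => stripWeight 2 (quotientNodes α β M) (Sum.inl (Sum.inl j)) / (2 * M))
      atTop (𝓝 (-2 * stripWeight 1 α j)) := by
  have h := (tendsto_mul_prod_div (neg_ne_zero.mpr two_ne_zero) (2 * α j - 1)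
    (fun i => 2 * α j - 2 * β i - 3) fun i => 2 * α j - 2 * β i - 1).mul_const (stripWeight 1 α j)
  refine h.congr fun M => ?_
  rw [stripWeight_quotientNodes_even]
  have hnum : ∀ i, 2 * α j - 2 - (2 * (β i + M) + 1) = (2 * α j - 2 * β i - 3 + -2 * M : ℚ) :=
    fun i => by ring
  have hden : ∀ i, 2 * α j - (2 * (β i + M) + 1) = (2 * α j - 2 * β i - 1 + -2 * M : ℚ) :=
    fun i => by ring
  simp only [hnum, hden]
  field_simp
  ring

theorem tendsto_stripWeight_odd (α : ι → ℕ) (β : κ → ℕ) (j : κ) :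
    Tendsto (fun M : ℕ => stripWeight 2 (quotientNodes α β M) (Sum.inl (Sum.inr j)) / (2 * M))
      atTop (𝓝 (2 * stripWeight 1 β j)) := by
  have h := (tendsto_mul_prod_div two_ne_zero (2 * β j + 1)
    (fun i => 2 * β j - 2 * α i - 1) fun i => 2 * β j - 2 * α i + 1).mul_const (stripWeight 1 β j)
  refine h.congr fun M => ?_
  rw [stripWeight_quotientNodes_odd]
  have hnum : ∀ i, 2 * (β j + M) + 1 - 2 - 2 * α i = (2 * β j - 2 * α i - 1 + 2 * M : ℚ) :=
    fun i => by ring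
  have hden : ∀ i, 2 * (β j + M) + 1 - 2 * α i = (2 * β j - 2 * α i + 1 + 2 * M : ℚ) :=
    fun i => by ring
  simp only [hnum, hden]
  field_simp
  ring

theorem coeff_succ_hermiteDet_quotientNodes {α : ι → ℕ} {β : κ → ℕ} (hα : Function.Injective α)
    (hβ : Function.Injective β) (M s : ℕ) :
    (s + 1) * (hermiteDet (quotientNodes α β M)).coeff (s + 1) = -1 / 2 *
      (∑ j, stripWeight 2 (quotientNodes α β M) (Sum.inl (Sum.inl j)) *
          (hermiteDet (quotientNodes (Function.update α j (α j - 1)) β M)).coeff s +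
        ∑ j, stripWeight 2 (quotientNodes α β M) (Sum.inl (Sum.inr j)) *
          (hermiteDet (quotientNodes α (Function.update β j (β j - 1)) M)).coeff s) := by
  rw [succ_mul_coeff_succ_hermiteDet (quotientNodes_injective hα hβ M), Fintype.sum_sum_type,
    Fintype.sum_sum_type]
  simp only [stripWeight_quotientNodes_pad, zero_mul, Finset.sum_const_zero, add_zero,
    update_quotientNodes_even]
  congr 2
  refine Finset.sum_congr rfl fun j _ => ?_
  rcases eq_or_ne (stripWeight 1 β j) 0 with hj | hj
  · rw [stripWeight_quotientNodes_odd, hj, zero_mul, zero_mul, zero_mul]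
  · rw [update_quotientNodes_odd α M (le_of_stripWeight_ne_zero hj)]

theorem tendsto_coeff_succ_hermiteDet_quotientNodes {α : ι → ℕ} {β : κ → ℕ}
    (hα : Function.Injective α) (hβ : Function.Injective β) {s : ℕ} {a b : ℚ}
    (ha : ∀ j, stripWeight 1 α j ≠ 0 → Tendsto (fun M : ℕ => (hermiteDet
      (quotientNodes (Function.update α j (α j - 1)) β M)).coeff s / (2 * M : ℚ) ^ s) atTop (𝓝 a))
    (hb : ∀ j, stripWeight 1 β j ≠ 0 → Tendsto (fun M : ℕ => (hermiteDet
      (quotientNodes α (Function.update β j (β j - 1)) M)).coeff s / (2 * M : ℚ) ^ s) atTop (𝓝 b)) :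
    Tendsto (fun M : ℕ => (hermiteDet (quotientNodes α β M)).coeff (s + 1) / (2 * M : ℚ) ^ (s + 1))
      atTop (𝓝 (((∑ j, stripWeight 1 α j) * a - (∑ j, stripWeight 1 β j) * b) / (s + 1))) := by
  have heven : ∀ j, Tendsto (fun M : ℕ =>
      stripWeight 2 (quotientNodes α β M) (Sum.inl (Sum.inl j)) / (2 * M) *
        ((hermiteDet (quotientNodes (Function.update α j (α j - 1)) β M)).coeff s /
          (2 * M : ℚ) ^ s)) atTop (𝓝 (-2 * stripWeight 1 α j * a)) := fun j => by
    rcases eq_or_ne (stripWeight 1 α j) 0 with hj | hj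
    · simp [stripWeight_quotientNodes_even, hj]
    · exact (tendsto_stripWeight_even α β j).mul (ha j hj)
  have hodd : ∀ j, Tendsto (fun M : ℕ =>
      stripWeight 2 (quotientNodes α β M) (Sum.inl (Sum.inr j)) / (2 * M) *
        ((hermiteDet (quotientNodes α (Function.update β j (β j - 1)) M)).coeff s /
          (2 * M : ℚ) ^ s)) atTop (𝓝 (2 * stripWeight 1 β j * b)) := fun j => by
    rcases eq_or_ne (stripWeight 1 β j) 0 with hj | hj
    · simp [stripWeight_quotientNodes_odd, hj]
    · exact (tendsto_stripWeight_odd α β j).mul (hb j hj)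
  have hlim := (((tendsto_finsetSum Finset.univ fun j _ => heven j).add
    (tendsto_finsetSum Finset.univ fun j _ => hodd j)).const_mul (-1 / 2)).div_const ((s : ℚ) + 1)
  simp only [← Finset.sum_mul, ← Finset.mul_sum, div_mul_div_comm, ← pow_succ',
    ← Finset.sum_div] at hlim
  have hs : (s + 1 : ℚ) ≠ 0 := s.cast_add_one_ne_zero
  convert hlim using 2 with M
  · rw [← add_div, ← mul_div_assoc, ← coeff_succ_hermiteDet_quotientNodes hα hβ, mul_div_assoc,
      mul_div_cancel_left₀ _ hs]
  · ring

theorem exists_sum_update_pred_eq {n : ι → ℕ} {j : ι} {m : ℕ}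
    (hn : Function.Injective (Function.update n j (n j - 1))) (hj : 1 ≤ n j)
    (hm : ∑ i, n i = m + (Fintype.card ι).choose 2) :
    ∃ m', m = m' + 1 ∧
      ∑ i, Function.update n j (n j - 1) i = m' + (Fintype.card ι).choose 2 := by
  have hle := choose_two_card_le_sum hn
  rw [Finset.sum_update_of_mem (Finset.mem_univ j)] at hle ⊢
  rw [← Finset.add_sum_erase _ _ (Finset.mem_univ j), Finset.erase_eq] at hm
  exact ⟨m - 1, by omega, by omega⟩

theorem sum_stripWeight_one_of_sum_eq {n : ι → ℕ} {m : ℕ} (hn : Function.Injective n)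
    (hm : ∑ i, n i = m + (Fintype.card ι).choose 2) : ∑ j, stripWeight 1 n j = m := by
  rw [sum_stripWeight_one hn, ← Nat.cast_sum, hm, Nat.cast_add, add_sub_cancel_right]

theorem tendsto_coeff_hermiteDet_quotientNodes {s t m n : ℕ} {α : ι → ℕ} {β : κ → ℕ}
    (hα : Function.Injective α) (hβ : Function.Injective β)
    (hm : ∑ i, α i = m + (Fintype.card ι).choose 2)
    (hn : ∑ j, β j = n + (Fintype.card κ).choose 2) (h : t + s = m + n) :
    Tendsto (fun M : ℕ => (hermiteDet (quotientNodes α β M)).coeff s / (2 * M : ℚ) ^ s) atTop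
      (𝓝 (((X + 1) ^ m * (X - 1) ^ n : ℚ[X]).coeff t)) := by
  induction s generalizing α β m n with
  | zero =>
    obtain rfl : t = m + n := h
    simp only [coeff_zero_hermiteDet (quotientNodes_injective hα hβ _), pow_zero, div_one,
      coeff_add_X_add_one_pow_mul_X_sub_one_pow, tendsto_const_nhds]
  | succ s ih =>
    have heven (j) (hj : stripWeight 1 α j ≠ 0) : Tendsto (fun M : ℕ => (hermiteDet
        (quotientNodes (Function.update α j (α j - 1)) β M)).coeff s / (2 * M : ℚ) ^ s) atTop
        (𝓝 (((X + 1) ^ (m - 1) * (X - 1) ^ n : ℚ[X]).coeff t)) := by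
      have hinj := injective_update_of_stripWeight_ne_zero hα hj
      obtain ⟨m, rfl, hm'⟩ := exists_sum_update_pred_eq hinj (le_of_stripWeight_ne_zero hj) hm
      exact ih hinj hβ hm' hn (by omega)
    have hodd (j) (hj : stripWeight 1 β j ≠ 0) : Tendsto (fun M : ℕ => (hermiteDet
        (quotientNodes α (Function.update β j (β j - 1)) M)).coeff s / (2 * M : ℚ) ^ s) atTop
        (𝓝 (((X + 1) ^ m * (X - 1) ^ (n - 1) : ℚ[X]).coeff t)) := by
      have hinj := injective_update_of_stripWeight_ne_zero hβ hj
      obtain ⟨n, rfl, hn'⟩ := exists_sum_update_pred_eq hinj (le_of_stripWeight_ne_zero hj) hn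
      exact ih hα hinj hm hn' (by omega)
    have hlim := tendsto_coeff_succ_hermiteDet_quotientNodes hα hβ heven hodd
    rwa [sum_stripWeight_one_of_sum_eq hα hm, sum_stripWeight_one_of_sum_eq hβ hn,
      ← succ_mul_coeff_X_add_one_pow_mul_X_sub_one_pow m n h,
      mul_div_cancel_left₀ _ s.cast_add_one_ne_zero] at hlim

theorem tendsto_coeff_hermiteDet_quotientNodes_shift {s t m n : ℕ} {α : ι → ℕ}
    {β : κ → ℕ} (hα : Function.Injective α) (hβ : Function.Injective β)
    (hm : ∑ i, α i = m + (Fintype.card ι).choose 2)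
    (hn : ∑ j, β j = n + (Fintype.card κ).choose 2) (h : t + s = m + n) (c : ℕ) :
    Tendsto (fun k : ℕ => (hermiteDet (quotientNodes α β (c + k))).coeff s / (2 * k : ℚ) ^ s)
      atTop (𝓝 (((X + 1) ^ m * (X - 1) ^ n : ℚ[X]).coeff t)) := by
  have hratio : Tendsto (fun k : ℕ => ((2 * (c + k : ℕ)) / (2 * k) : ℚ) ^ s) atTop (𝓝 1) := by
    have := (tendsto_add_mul_div_add_mul_atTop_nhds (2 * c : ℚ) 0 2 two_ne_zero).pow s
    simpa only [div_self (two_ne_zero' ℚ), one_pow, zero_add, Nat.cast_add, mul_add] using this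
  have hlim := (tendsto_coeff_hermiteDet_quotientNodes hα hβ hm hn h).comp
    (tendsto_add_atTop_nat c)
  rw [← mul_one (coeff _ t)]
  refine (hlim.mul hratio).congr' ?_
  filter_upwards [eventually_gt_atTop 0] with k hk
  have hne : (2 * (c + k : ℕ) : ℚ) ^ s ≠ 0 := by positivity
  rw [Function.comp_apply, add_comm k c, div_pow, div_mul_div_cancel₀ hne]

end

/-! ### Uniform convergence -/

theorem tendstoUniformlyOn_sum_mul_pow {R ι : Type*} [Semiring R] [UniformSpace R]
    [IsTopologicalSemiring R] [LocallyCompactSpace R] {l : Filter ι} {a : ι → ℕ → R}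
    {b : ℕ → R} {n : ℕ}
    (h : ∀ t ∈ Finset.range n, Tendsto (fun k => a k t) l (𝓝 (b t))) {K : Set R}
    (hK : IsCompact K) :
    TendstoUniformlyOn (fun k x => ∑ t ∈ Finset.range n, a k t * x ^ t)
      (fun x => ∑ t ∈ Finset.range n, b t * x ^ t) l K := by
  have hconst : Continuous (ContinuousMap.const R : R → C(R, R)) := ContinuousMap.continuous_const'
  have hsum : Tendsto (fun k => ∑ t ∈ Finset.range n,
      ContinuousMap.const R (a k t) * ContinuousMap.id R ^ t) l
      (𝓝 (∑ t ∈ Finset.range n, ContinuousMap.const R (b t) * ContinuousMap.id R ^ t)) :=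
    tendsto_finsetSum _ fun t ht => ((hconst.tendsto _).comp (h t ht)).mul_const _
  simpa [Finset.sum_fn] using
    ContinuousMap.tendsto_iff_forall_isCompact_tendstoUniformlyOn.mp hsum K hK

theorem continuous_ratCast_complex : Continuous ((↑) : ℚ → ℂ) := by
  simpa [Function.comp_def] using Complex.continuous_ofReal.comp Rat.continuous_coe_real

theorem tendsto_complex_coeff_hermiteDet_quotientNodes {μ ν : List ℕ} (hμ : μ.Pairwise (· ≥ ·))
    (hν : ν.Pairwise (· ≥ ·)) {t : ℕ} (ht : t ≤ μ.sum + ν.sum) :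
    Tendsto (fun k : ℕ =>
        (((hermiteDet (quotientNodes (paddedDegVec μ ν) (degVec ν) (μ.length + k))).coeff
          (μ.sum + ν.sum - t) / (2 * k : ℚ) ^ (μ.sum + ν.sum - t) : ℚ) : ℂ)) atTop
      (𝓝 (((X + 1) ^ μ.sum * (X - 1) ^ ν.sum : ℚ[X]).coeff t : ℂ)) :=
  (continuous_ratCast_complex.tendsto _).comp <|
    tendsto_coeff_hermiteDet_quotientNodes_shift (paddedDegVec_injective hμ ν) (degVec_injective hν)
      (by simpa using sum_paddedDegVec μ ν) (by simpa using sum_degVec ν) (Nat.add_sub_of_le ht) _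

theorem eval_remainderPoly_div {μ ν : List ℕ} (hμ : μ.Pairwise (· ≥ ·))
    (hν : ν.Pairwise (· ≥ ·)) {k : ℕ} (hk : k ≠ 0) (x : ℂ) :
    ((remainderPoly μ ν k).map (algebraMap ℚ ℂ)).eval (2 * (k : ℂ) * x) /
        (2 * (k : ℂ)) ^ (μ.sum + ν.sum) =
      ∑ t ∈ Finset.range (μ.sum + ν.sum + 1),
        (((hermiteDet (quotientNodes (paddedDegVec μ ν) (degVec ν) (μ.length + k))).coeff
          (μ.sum + ν.sum - t) / (2 * k : ℚ) ^ (μ.sum + ν.sum - t) : ℚ) : ℂ) * x ^ t := by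
  have hne : (2 * k : ℂ) ≠ 0 := by simpa using hk
  simp only [remainderPoly, eval_map, eval₂_finsetSum, eval₂_mul, eval₂_C, eval₂_pow, eval₂_X,
    eq_ratCast, Finset.sum_div]
  refine Finset.sum_congr rfl fun t ht => ?_
  obtain ⟨s, hs⟩ := Nat.exists_eq_add_of_le (Finset.mem_range_succ_iff.mp ht)
  rw [coeff_HeW_Phi hμ hν k hs.symm, hs, Nat.add_sub_cancel_left]
  push_cast
  field_simp
  ring

theorem add_one_pow_mul_sub_one_pow_eq_sum {K : Type*} [Field K] [CharZero K] (m n : ℕ) (x : K) :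
    (x + 1) ^ m * (x - 1) ^ n = ∑ t ∈ Finset.range (m + n + 1),
      (((X + 1) ^ m * (X - 1) ^ n : ℚ[X]).coeff t : K) * x ^ t := by
  have hdeg : ((X + 1) ^ m * (X - 1) ^ n : ℚ[X]).natDegree < m + n + 1 := by
    rw [Nat.lt_succ_iff]
    compute_degree
  have h := eval₂_eq_sum_range' (algebraMap ℚ K) hdeg x
  simpa [eval₂_mul, eval₂_pow] using h

end HermiteWronskian

/-- Asymptotics of the remainder polynomial for a fixed 2-quotient `(μ,ν)`:
`R_k(2kx)/(2k)^{|μ|+|ν|} → (x+1)^{|μ|} (x−1)^{|ν|}` as `k → ∞`,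
uniformly on compact subsets of the complex plane. -/
theorem remainderPoly_tendstoUniformlyOn (μ ν : List ℕ)
    (hμ : IsPartition μ) (hν : IsPartition ν)
    (K : Set ℂ) (hK : IsCompact K) :
    TendstoUniformlyOn
      (fun (k : ℕ) (x : ℂ) =>
        ((remainderPoly μ ν k).map (algebraMap ℚ ℂ)).eval (2 * (k : ℂ) * x) /
          (2 * (k : ℂ)) ^ (μ.sum + ν.sum))
      (fun x => (x + 1) ^ μ.sum * (x - 1) ^ ν.sum)
      Filter.atTop K := by
  simp only [HermiteWronskian.add_one_pow_mul_sub_one_pow_eq_sum]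
  have hlim := HermiteWronskian.tendstoUniformlyOn_sum_mul_pow (fun t ht =>
    HermiteWronskian.tendsto_complex_coeff_hermiteDet_quotientNodes hμ.1 hν.1
      (Finset.mem_range_succ_iff.mp ht)) hK
  refine hlim.congr ?_
  filter_upwards [Filter.eventually_ne_atTop 0] with k hk x _
  exact (HermiteWronskian.eval_remainderPoly_div hμ.1 hν.1 hk x).symm
end
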